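/- Assume conditions (Cond1), (CondAttr2) and (CondAttr3). Let u₀ⁿ → u₀ in H and σ_n = (b_n, ω_n) → σ = (b̄, ω̄) in Σ. Then for any sequence of solutions u_n ∈ 𝒟_{0,σ_n}(u₀ⁿ) there exist a subsequence u_{n'} and a solution u ∈ 𝒟_{0,σ}(u₀) such that u_{n'} → u in C([0,+∞),H) (uniformly on compact subsets of [0,+∞)). -/

import Mathlib

open MeasureTheory Set

noncomputable section

/-- Lebesgue measure restricted to the spatial interval `(0,1)`. -/
def μ01 : Measure ℝ := volume.restrict (Ioo (0:ℝ) 1)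

/-- `H = L²(0,1)`. -/
abbrev Hsp : Type := Lp ℝ 2 μ01

/-- The Heaviside multifunction. -/
def heaviside (s : ℝ) : Set ℝ :=
  if s < 0 then {-1} else if s = 0 then Icc (-1) 1 else {1}

/-- Condition (Cond1). -/
structure Cond1 (b ω : ℝ → ℝ) (b0 b1 ω0 ω1 : ℝ) : Prop where
  contb : Continuous b
  contω : Continuous ω
  b0pos : 0 < b0
  blb : ∀ t, b0 ≤ b t
  bub : ∀ t, b t ≤ b1
  ω0nonneg : 0 ≤ ω0
  ωlb : ∀ t, ω0 ≤ ω t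
  ωub : ∀ t, ω t ≤ ω1

/-- `v ∈ H²(0,1) ∩ H¹₀(0,1)` with (weak) second derivative `w ∈ L²(0,1)`:
`v` has a representative that is continuous on `[0,1]`, vanishes at the boundary,
is differentiable on `(0,1)` and whose derivative is an antiderivative of `w`. -/
def InDomainA (v w : Hsp) : Prop :=
  ∃ vt : ℝ → ℝ, ContinuousOn vt (Icc 0 1) ∧ vt 0 = 0 ∧ vt 1 = 0 ∧
    (∀ᵐ x ∂μ01, vt x = v x) ∧
    ∃ g : ℝ → ℝ,
      (∀ x ∈ Ioo (0:ℝ) 1, HasDerivAt vt (g x) x) ∧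
      ∀ x ∈ Ioo (0:ℝ) 1, ∀ y ∈ Ioo (0:ℝ) 1, g x - g y = ∫ z in y..x, w z

/-- A strong solution of the inclusion on `[τ,∞)`, with explicit data:
`r` is the `L²`-selection, `u'` the time derivative, `uxx` the second spatial derivative. -/
structure IsStrongSolutionWith (b ω : ℝ → ℝ) (τ : ℝ) (u r u' uxx : ℝ → Hsp) : Prop where
  cont : ContinuousOn u (Ici τ)
  rmem : ∀ T, τ < T → MemLp r 2 (volume.restrict (Ioo τ T))
  sel : ∀ᵐ t ∂(volume.restrict (Ioi τ)), ∀ᵐ x ∂μ01,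
      ∃ h ∈ heaviside (u t x), r t x = b t * h + ω t * u t x
  dom : ∀ᵐ t ∂(volume.restrict (Ioi τ)), InDomainA (u t) (uxx t)
  eq : ∀ᵐ t ∂(volume.restrict (Ioi τ)), u' t = r t + uxx t
  fund : ∀ T1 T2 : ℝ, τ < T1 → T1 < T2 →
      IntervalIntegrable u' volume T1 T2 ∧
      ∀ t ∈ Icc T1 T2, u t = u T1 + ∫ s in T1..t, u' s

/-- A strong solution of the inclusion on `[τ,∞)`. -/
def IsStrongSolution (b ω : ℝ → ℝ) (τ : ℝ) (u : ℝ → Hsp) : Prop :=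
  ∃ r u' uxx, IsStrongSolutionWith b ω τ u r u' uxx

/-- The solution is non-negative on `[τ,∞)`. -/
def NonnegOn (u : ℝ → Hsp) (τ : ℝ) : Prop :=
  ∀ t, τ ≤ t → ∀ᵐ x ∂μ01, 0 ≤ u t x

/-- `v` is positive: it has a continuous representative on `[0,1]`
which is strictly positive on `(0,1)`. -/
def IsPositive (v : Hsp) : Prop :=
  ∃ vt : ℝ → ℝ, ContinuousOn vt (Icc 0 1) ∧ (∀ᵐ x ∂μ01, vt x = v x) ∧
    ∀ x ∈ Ioo (0:ℝ) 1, 0 < vt x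


/-- The translation (driving) operator `θ_h` on symbols `σ ∈ C(ℝ,ℝ²)`:
`(θ_h σ)(t) = σ(t+h)`. -/
def translateCM (h : ℝ) (σ : C(ℝ, ℝ × ℝ)) : C(ℝ, ℝ × ℝ) :=
  σ.comp ⟨fun t => t + h, continuous_add_right h⟩

/-- The hull of a symbol `σ₀`: the closure (for the topology of uniform
convergence on compact sets, i.e. the compact-open topology) of its translates. -/
def hullSet (σ0 : C(ℝ, ℝ × ℝ)) : Set C(ℝ, ℝ × ℝ) :=
  closure {σ | ∃ h : ℝ, σ = translateCM h σ0}

/-- The multivalued process associated with the symbol `σ`: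
`U_σ(t,τ,x) = {u(t) : u ∈ 𝒟_{τ,σ}(x)}`. -/
def Usol (σ : C(ℝ, ℝ × ℝ)) (t τ : ℝ) (x : Hsp) : Set Hsp :=
  {y | ∃ u : ℝ → Hsp,
      IsStrongSolution (fun s => (σ s).1) (fun s => (σ s).2) τ u ∧
      u τ = x ∧ y = u t}


theorem prod_rule {F G f g : ℝ → ℝ} {a b : ℝ} (hab : a ≤ b)
    (hf : IntervalIntegrable f volume a b) (hg : IntervalIntegrable g volume a b)
    (hF : ∀ x ∈ Icc a b, F x = F a + ∫ s in a..x, f s)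
    (hG : ∀ x ∈ Icc a b, G x = G a + ∫ s in a..x, g s) :
    F b * G b - F a * G a = ∫ s in a..b, (f s * G s + F s * g s) := by
  have key : ∀ {F f : ℝ → ℝ}, IntervalIntegrable f volume a b →
      (∀ x ∈ Icc a b, F x = F a + ∫ s in a..x, f s) →
      AbsolutelyContinuousOnInterval (fun x => F a + ∫ s in a..x, f s) a b ∧
      ∀ᵐ x, x ∈ uIcc a b → deriv (fun x => F a + ∫ s in a..x, f s) x = f x := by
    intro F f hf hF
    constructor
    · exact ((LipschitzWith.const (F a)).lipschitzOnWith.absolutelyContinuousOnInterval).fun_add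
        (hf.absolutelyContinuousOnInterval_intervalIntegral (c := a) (by simp))
    · filter_upwards [hf.ae_hasDerivAt_integral] with x hx hxm
      exact ((hx hxm a (by simp)).const_add (F a)).deriv
  obtain ⟨aF, dF⟩ := key hf hF
  obtain ⟨aG, dG⟩ := key hg hG
  have := aF.integral_deriv_mul_eq_sub aG
  simp only [intervalIntegral.integral_same, add_zero] at this
  rw [hF b ⟨hab, le_rfl⟩, hG b ⟨hab, le_rfl⟩, ← this]
  apply intervalIntegral.integral_congr_ae
  filter_upwards [dF, dG] with x h1 h2 hx
  have hx' := uIoc_subset_uIcc hx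
  rw [h1 hx', h2 hx']
  rw [uIcc_of_le hab] at hx'
  rw [← hF x hx', ← hG x hx']

instance : IsProbabilityMeasure μ01 := ⟨by simp [μ01]⟩

theorem int_mu01 (f : ℝ → ℝ) : ∫ x, f x ∂μ01 = ∫ x in (0:ℝ)..1, f x := by
  rw [intervalIntegral.integral_of_le zero_le_one, integral_Ioc_eq_integral_Ioo, μ01]

theorem ii_of_Lp (w : Hsp) : IntervalIntegrable w volume 0 1 := by
  rw [intervalIntegrable_iff_integrableOn_Ioo_of_le zero_le_one]
  exact (Lp.memLp w).integrable (by norm_num)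

theorem ibp_sin {v w : Hsp} (h : InDomainA v w) (κ : ℝ) (hκ : Real.sin κ = 0) :
    ∫ x, w x * Real.sin (κ * x) ∂μ01 = -κ^2 * ∫ x, v x * Real.sin (κ * x) ∂μ01 := by
  obtain ⟨vt, vc, v0, v1, vv, g, hg, hgw⟩ := h
  have hw := ii_of_Lp w
  set G : ℝ → ℝ := fun x => (g (1/2) - ∫ z in (0:ℝ)..(1/2), w z) + ∫ z in (0:ℝ)..x, w z with hGd
  have hsub : ∀ x ∈ Icc (0:ℝ) 1, IntervalIntegrable w volume 0 x := by
    intro x hx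
    apply hw.mono_set
    rw [uIcc_of_le zero_le_one, uIcc_of_le hx.1]
    exact Icc_subset_Icc le_rfl hx.2
  have hGg : ∀ x ∈ Ioo (0:ℝ) 1, G x = g x := by
    intro x hx
    have h1 := hgw x hx (1/2) (by constructor <;> norm_num)
    have h2 := intervalIntegral.integral_add_adjacent_intervals
      (hsub (1/2) (by constructor <;> norm_num))
      ((hsub (1/2) (by constructor <;> norm_num)).symm.trans (hsub x ⟨hx.1.le, hx.2.le⟩))
    simp only [hGd]
    linarith
  have hG0 : G 0 = g (1/2) - ∫ z in (0:ℝ)..(1/2), w z := by simp [hGd]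
  have Gc : ContinuousOn G (Icc 0 1) := by
    apply continuousOn_const.add
    have := intervalIntegral.continuousOn_primitive_interval' hw (a := 0) (by simp)
    rwa [uIcc_of_le zero_le_one] at this
  -- first: vt * cos
  have dcos : ∀ x, HasDerivAt (fun x => Real.cos (κ * x)) (-(κ * Real.sin (κ * x))) x := by
    intro x
    have := ((hasDerivAt_id' x).const_mul κ).cos
    convert this using 1
    ring
  have dsin : ∀ x, HasDerivAt (fun x => Real.sin (κ * x)) (κ * Real.cos (κ * x)) x := by
    intro x
    have := ((hasDerivAt_id' x).const_mul κ).sin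
    convert this using 1
    ring
  have i1 : IntervalIntegrable (fun x => G x * Real.cos (κ * x)) volume 0 1 := by
    apply ContinuousOn.intervalIntegrable
    rw [uIcc_of_le zero_le_one]
    exact Gc.mul (by fun_prop)
  have i2 : IntervalIntegrable (fun x => vt x * Real.sin (κ * x)) volume 0 1 := by
    apply ContinuousOn.intervalIntegrable
    rw [uIcc_of_le zero_le_one]
    exact vc.mul (by fun_prop)
  have e1 : ∫ x in (0:ℝ)..1, (G x * Real.cos (κ * x) - κ * (vt x * Real.sin (κ * x))) = 0 := by
    rw [intervalIntegral.integral_eq_sub_of_hasDerivAt_of_le zero_le_one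
      (f := fun x => vt x * Real.cos (κ * x)) (vc.mul (by fun_prop))]
    · simp [v0, v1]
    · intro x hx
      have := (hg x hx).fun_mul (dcos x)
      rw [← hGg x hx] at this
      refine this.congr_deriv ?_
      ring
    · exact i1.sub (i2.const_mul κ)
  rw [intervalIntegral.integral_sub i1 (i2.const_mul κ), intervalIntegral.integral_const_mul] at e1
  have e2 := prod_rule (F := G) (G := fun x => Real.sin (κ * x)) (f := w)
    (g := fun x => κ * Real.cos (κ * x)) zero_le_one hw
    (by apply Continuous.intervalIntegrable; fun_prop)
    (by intro x hx; rw [hG0])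
    (by
      intro x hx
      rw [intervalIntegral.integral_eq_sub_of_hasDerivAt (f := fun x => Real.sin (κ * x))
        (fun y _ => dsin y) (by apply Continuous.intervalIntegrable; fun_prop)]
      simp)
  have i3 : IntervalIntegrable (fun x => w x * Real.sin (κ * x)) volume 0 1 :=
    hw.mul_continuousOn (by fun_prop)
  have e3 : ∫ s in (0:ℝ)..1, (w s * Real.sin (κ * s) + G s * (κ * Real.cos (κ * s)))
      = (∫ s in (0:ℝ)..1, w s * Real.sin (κ * s)) + κ * ∫ s in (0:ℝ)..1, G s * Real.cos (κ * s) := by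
    rw [← intervalIntegral.integral_const_mul, ← intervalIntegral.integral_add i3 (i1.const_mul κ)]
    congr 1; ext s; ring
  rw [e3] at e2
  simp only [mul_one, hκ, mul_zero, Real.sin_zero, sub_self] at e2
  have e4 : ∫ x, v x * Real.sin (κ * x) ∂μ01 = ∫ x in (0:ℝ)..1, vt x * Real.sin (κ * x) := by
    rw [← int_mu01]
    apply integral_congr_ae
    filter_upwards [vv] with x hx
    rw [hx]
  rw [e4, int_mu01]
  linear_combination -e2 - κ * e1

def kap (k : ℕ) : ℝ := ((k:ℝ) + 1) * Real.pi
def lam (k : ℕ) : ℝ := kap k ^ 2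

theorem kap_pos (k : ℕ) : 0 < kap k := by unfold kap; positivity
theorem lam_pos (k : ℕ) : 0 < lam k := by have := kap_pos k; unfold lam; positivity
theorem lam_strictMono : StrictMono lam := by
  intro a b h
  have h' : (a:ℝ) < b := by exact_mod_cast h
  have := kap_pos a
  unfold lam
  apply pow_lt_pow_left₀ _ this.le (by norm_num)
  unfold kap
  have := Real.pi_pos
  nlinarith
theorem sin_kap (k : ℕ) : Real.sin (kap k) = 0 := by
  have := Real.sin_nat_mul_pi (k+1)
  push_cast at this
  exact this

theorem eS_memLp (k : ℕ) : MemLp (fun x => √2 * Real.sin (kap k * x)) 2 μ01 := by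
  apply MemLp.of_bound (C := √2) (by fun_prop)
  filter_upwards with x
  rw [norm_mul, Real.norm_of_nonneg (by positivity), Real.norm_eq_abs]
  have := Real.abs_sin_le_one (kap k * x)
  have h2 : 0 ≤ √(2:ℝ) := by positivity
  nlinarith

def eS (k : ℕ) : Hsp := (eS_memLp k).toLp

theorem eS_coe (k : ℕ) : eS k =ᵐ[μ01] fun x => √2 * Real.sin (kap k * x) := MemLp.coeFn_toLp _

theorem inner_eS (k : ℕ) (v : Hsp) :
    inner ℝ (eS k) v = √2 * ∫ x, v x * Real.sin (kap k * x) ∂μ01 := by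
  rw [L2.inner_def, ← integral_const_mul]
  apply integral_congr_ae
  filter_upwards [eS_coe k] with x hx
  rw [hx]
  simp
  ring

theorem inner_dom {v w : Hsp} (h : InDomainA v w) (k : ℕ) :
    inner ℝ (eS k) w = - lam k * inner ℝ (eS k) v := by
  rw [inner_eS, inner_eS, ibp_sin h _ (sin_kap k)]
  unfold lam; ring

theorem eS_dom (k : ℕ) : InDomainA (eS k) (-(lam k) • eS k) := by
  refine ⟨fun x => √2 * Real.sin (kap k * x), by fun_prop, by simp, by simp [sin_kap], ?_,
    fun x => √2 * (kap k * Real.cos (kap k * x)), ?_, ?_⟩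
  · filter_upwards [eS_coe k] with x hx
    rw [hx]
  · intro x hx
    have := (((hasDerivAt_id' x).const_mul (kap k)).sin).const_mul √2
    refine this.congr_deriv ?_
    ring
  · intro x hx y hy
    have e : ∫ z in y..x, (-(lam k) • eS k : Hsp) z
        = ∫ z in y..x, √2 * (kap k * (-Real.sin (kap k * z) * (kap k * 1))) := by
      apply intervalIntegral.integral_congr_ae
      have h1 := Lp.coeFn_smul (-(lam k)) (eS k)
      have h2 := eS_coe k
      have h3 := (ae_restrict_iff' measurableSet_Ioo).1 (h1.and h2)
      filter_upwards [h3] with z hz hzm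
      have hz' : z ∈ Ioo (0:ℝ) 1 := by
        rw [uIoc, mem_Ioc] at hzm
        exact ⟨lt_trans (lt_min hy.1 hx.1) hzm.1, lt_of_le_of_lt hzm.2 (max_lt hy.2 hx.2)⟩
      obtain ⟨a, b⟩ := hz hz'
      rw [a, Pi.smul_apply, b]
      simp only [smul_eq_mul, lam]
      ring
    rw [e, intervalIntegral.integral_eq_sub_of_hasDerivAt
      (f := fun x => √2 * (kap k * Real.cos (kap k * x)))]
    · intro z _
      exact ((((hasDerivAt_id' z).const_mul (kap k)).cos).const_mul (kap k)).const_mul √2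
    · apply Continuous.intervalIntegrable; fun_prop

theorem eS_orth : Orthonormal ℝ eS := by
  constructor
  · intro k
    have : inner ℝ (eS k) (eS k) = 1 := by
      rw [inner_eS]
      have e : ∫ x, (eS k) x * Real.sin (kap k * x) ∂μ01
          = √2 * ∫ x in (0:ℝ)..1, Real.sin (kap k * x) ^ 2 := by
        rw [← int_mu01, ← integral_const_mul]
        apply integral_congr_ae
        filter_upwards [eS_coe k] with x hx
        rw [hx]; ring
      rw [e, intervalIntegral.integral_comp_mul_left (fun x => Real.sin x ^ 2) (kap_pos k).ne',
        integral_sin_sq]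
      simp only [mul_zero, mul_one, Real.sin_zero, sin_kap, zero_mul, smul_eq_mul]
      have := (kap_pos k).ne'
      have h2 : √(2:ℝ) * √2 = 2 := Real.mul_self_sqrt (by norm_num)
      field_simp
      rw [sq, h2]; ring
    rw [real_inner_self_eq_norm_sq] at this
    have h0 := norm_nonneg (eS k)
    nlinarith
  · intro i j hij
    have h1 := inner_dom (eS_dom i) j
    rw [inner_smul_right] at h1
    have h2 : lam i ≠ lam j := lam_strictMono.injective.ne hij
    have h3 : (lam i - lam j) * inner ℝ (eS j) (eS i) = 0 := by linarith
    rcases mul_eq_zero.1 h3 with h | h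
    · exact absurd (sub_eq_zero.1 h) h2
    · rw [real_inner_comm]; exact h

theorem eS_complete (f : Hsp) (hf : ∀ k, inner ℝ (eS k) f = 0) : f = 0 := by
  have hfi : Integrable f μ01 := (Lp.memLp f).integrable (by norm_num)
  have bd : ∀ (φ : ℝ → ℝ), ContinuousOn φ (Icc 0 1) → Integrable (fun x => f x * φ x) μ01 := by
    intro φ hφ
    have := (ii_of_Lp f).mul_continuousOn (g := φ) (by rwa [uIcc_of_le zero_le_one])
    rwa [intervalIntegrable_iff_integrableOn_Ioo_of_le zero_le_one] at this
  have h0 : ∀ k : ℕ, ∫ x, f x * Real.sin (k * (Real.pi * x)) ∂μ01 = 0 := by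
    intro k
    rcases k with _ | k
    · simp
    · have := hf k
      rw [inner_eS] at this
      have h2 : √(2:ℝ) ≠ 0 := by positivity
      have := (mul_eq_zero.1 this).resolve_left h2
      rw [← this]
      congr 1; ext x; unfold kap; push_cast; ring_nf
  have h1 : ∀ m k : ℕ, ∫ x, f x * (Real.sin (k * (Real.pi * x)) * Real.cos (Real.pi * x) ^ m) ∂μ01 = 0 := by
    intro m
    induction m with
    | zero => intro k; simpa using h0 k
    | succ m ih =>
      intro k
      rcases k with _ | k
      · simp
      · have e1 := ih k
        have e2 := ih (k+2)
        have : ∀ x, f x * (Real.sin ((k+1:ℕ) * (Real.pi * x)) * Real.cos (Real.pi * x) ^ (m+1))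
            = (1/2) * (f x * (Real.sin (k * (Real.pi * x)) * Real.cos (Real.pi * x) ^ m)
              + f x * (Real.sin ((k+2:ℕ) * (Real.pi * x)) * Real.cos (Real.pi * x) ^ m)) := by
          intro x
          have a1 := Real.sin_add ((k+1:ℕ) * (Real.pi * x)) (Real.pi * x)
          have a2 := Real.sin_sub ((k+1:ℕ) * (Real.pi * x)) (Real.pi * x)
          have b1 : ((k+1:ℕ):ℝ) * (Real.pi * x) + Real.pi * x = (k+2:ℕ) * (Real.pi * x) := by
            push_cast; ring
          have b2 : ((k+1:ℕ):ℝ) * (Real.pi * x) - Real.pi * x = k * (Real.pi * x) := by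
            push_cast; ring
          rw [b1] at a1
          rw [b2] at a2
          rw [a1, a2]
          ring
        simp_rw [this]
        rw [integral_const_mul, integral_add (bd _ (by fun_prop)) (bd _ (by fun_prop)), e1, e2]
        simp
  have h2 : ∀ p : Polynomial ℝ,
      ∫ x, f x * (Real.sin (Real.pi * x) * p.eval (Real.cos (Real.pi * x))) ∂μ01 = 0 := by
    intro p
    induction p using Polynomial.induction_on' with
    | add p q hp hq =>
      simp_rw [Polynomial.eval_add, mul_add]
      rw [integral_add (bd _ (by fun_prop)) (bd _ (by fun_prop)), hp, hq, add_zero]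
    | monomial n a =>
      have := h1 n 1
      simp only [Nat.cast_one, one_mul] at this
      simp_rw [Polynomial.eval_monomial]
      rw [← mul_zero a, ← this, ← integral_const_mul]
      congr 1; ext x; ring
  have h3 : ∀ ψ : ℝ → ℝ, Continuous ψ →
      ∫ x, f x * (Real.sin (Real.pi * x) * ψ x) ∂μ01 = 0 := by
    intro ψ hψ
    by_contra hne
    set I := ∫ x, f x * (Real.sin (Real.pi * x) * ψ x) ∂μ01 with hI
    have hIp : 0 < |I| := abs_pos.2 hne
    set M := ∫ x, |f x| ∂μ01 with hM
    have hM0 : 0 ≤ M := integral_nonneg (fun _ => abs_nonneg _)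
    obtain ⟨p, hp⟩ := exists_polynomial_near_of_continuousOn (-1) 1
      (fun y => ψ (Real.arccos y / Real.pi)) (by
        apply Continuous.continuousOn
        exact hψ.comp (Real.continuous_arccos.div_const _)) (|I| / (M + 1)) (by positivity)
    have e : I = ∫ x, f x * (Real.sin (Real.pi * x) *
        (ψ x - p.eval (Real.cos (Real.pi * x)))) ∂μ01 := by
      simp_rw [mul_sub]
      rw [integral_sub (bd _ (by fun_prop)) (bd _ (by fun_prop)), h2, sub_zero]
    have le : |I| ≤ ∫ x, |f x| * (|I| / (M + 1)) ∂μ01 := by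
      rw [← Real.norm_eq_abs]
      conv_lhs => rw [e]
      apply norm_integral_le_of_norm_le (hfi.abs.mul_const _)
      have : ∀ᵐ x ∂μ01, x ∈ Ioo (0:ℝ) 1 := ae_restrict_mem measurableSet_Ioo
      filter_upwards [this] with x hx
      have h := hp (Real.cos (Real.pi * x)) ⟨Real.neg_one_le_cos _, Real.cos_le_one _⟩
      rw [Real.arccos_cos (by have := Real.pi_pos; have := hx.1; positivity)
        (by have := Real.pi_pos; have := hx.2; nlinarith),
        mul_div_cancel_left₀ _ Real.pi_ne_zero, abs_sub_comm] at h
      rw [norm_mul, norm_mul, Real.norm_eq_abs, Real.norm_eq_abs, Real.norm_eq_abs]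
      apply mul_le_mul_of_nonneg_left _ (abs_nonneg _)
      have := Real.abs_sin_le_one (Real.pi * x)
      have h4 := abs_nonneg (ψ x - p.eval (Real.cos (Real.pi * x)))
      rw [← Real.norm_eq_abs I] at h
      nlinarith
    rw [integral_mul_const, ← hM] at le
    have : M * (|I| / (M + 1)) < |I| := by
      rw [mul_div_assoc', div_lt_iff₀ (by positivity)]
      nlinarith
    linarith
  have h4 := isOpen_Ioo.ae_eq_zero_of_integral_contDiff_smul_eq_zero (U := Ioo (0:ℝ) 1)
    (f := fun x => f x * Real.sin (Real.pi * x)) (μ := volume)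
    (by
      have := bd (fun x => Real.sin (Real.pi * x)) (by fun_prop)
      exact IntegrableOn.locallyIntegrableOn this)
    (by
      intro g hg _ hs
      rw [← h3 g hg.continuous]
      unfold μ01
      rw [setIntegral_eq_integral_of_forall_compl_eq_zero]
      · congr 1; ext x; simp only [smul_eq_mul]; ring
      · intro x hx
        have : g x = 0 := by
          by_contra hgx
          exact hx (hs (subset_tsupport _ hgx))
        simp [this])
  rw [Lp.eq_zero_iff_ae_eq_zero]
  have h5 := (ae_restrict_iff' measurableSet_Ioo).2 h4
  have h6 : ∀ᵐ x ∂μ01, x ∈ Ioo (0:ℝ) 1 := ae_restrict_mem measurableSet_Ioo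
  filter_upwards [h5, h6] with x hx hxm
  have : 0 < Real.sin (Real.pi * x) := Real.sin_pos_of_pos_of_lt_pi
    (mul_pos Real.pi_pos hxm.1) (by have := Real.pi_pos; have := hxm.2; nlinarith)
  simpa [this.ne'] using hx

def hB : HilbertBasis ℕ ℝ Hsp := HilbertBasis.mkOfOrthogonalEqBot eS_orth (by
  rw [Submodule.eq_bot_iff]
  intro f hf
  apply eS_complete
  intro k
  exact (Submodule.mem_orthogonal _ _).1 hf _ (Submodule.subset_span ⟨k, rfl⟩))

theorem hB_coe (k : ℕ) : hB k = eS k := by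
  simp [hB]

theorem eS_ext {f g : Hsp} (h : ∀ k, inner ℝ (eS k) f = inner ℝ (eS k) g) : f = g := by
  rw [← sub_eq_zero]
  apply eS_complete
  intro k
  rw [inner_sub_right, h, sub_self]

theorem parseval (f : Hsp) : HasSum (fun k => (inner ℝ (eS k) f)^2) (‖f‖^2) := by
  have := hB.hasSum_inner_mul_inner f f
  rw [real_inner_self_eq_norm_sq] at this
  refine this.congr_fun ?_
  intro k
  rw [hB_coe, real_inner_comm f, sq]

theorem dom_of_inner {v w : Hsp} (h : ∀ k, inner ℝ (eS k) w = - lam k * inner ℝ (eS k) v) :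
    InDomainA v w := by
  have hw : Integrable w μ01 := (Lp.memLp w).integrable (by norm_num)
  set w' : ℝ → ℝ := indicator (Ioo 0 1) w with hw'
  have hw'i : Integrable w' volume := (integrable_indicator_iff measurableSet_Ioo).2 hw
  have c1 : Continuous (fun x => ∫ z in (0:ℝ)..x, w' z) :=
    intervalIntegral.continuous_primitive (fun a b => hw'i.intervalIntegrable) 0
  set A := ∫ x in (0:ℝ)..1, ∫ z in (0:ℝ)..x, w' z
  set g : ℝ → ℝ := fun x => -A + ∫ z in (0:ℝ)..x, w' z with hg
  have gc : Continuous g := continuous_const.add c1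
  set vt : ℝ → ℝ := fun x => ∫ y in (0:ℝ)..x, g y with hvt
  have vd : ∀ x, HasDerivAt vt (g x) x := fun x =>
    intervalIntegral.integral_hasDerivAt_right (gc.intervalIntegrable _ _)
      gc.stronglyMeasurable.stronglyMeasurableAtFilter gc.continuousAt
  have vc : Continuous vt := continuous_iff_continuousAt.2 fun x => (vd x).continuousAt
  have v1 : vt 1 = 0 := by
    simp only [hvt, hg]
    rw [intervalIntegral.integral_add (by simp) (c1.intervalIntegrable _ _)]
    simp [A]
  have vm : MemLp vt 2 μ01 := by
    obtain ⟨C, hC⟩ := (isCompact_Icc (a := (0:ℝ)) (b := 1)).exists_bound_of_continuousOn vc.continuousOn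
    apply MemLp.of_bound vc.aestronglyMeasurable C
    have h6 : ∀ᵐ x ∂μ01, x ∈ Ioo (0:ℝ) 1 := ae_restrict_mem measurableSet_Ioo
    filter_upwards [h6] with x hx
    exact hC x ⟨hx.1.le, hx.2.le⟩
  have key : InDomainA vm.toLp w := by
    refine ⟨vt, vc.continuousOn, by simp [hvt], v1, ?_, g, fun x _ => vd x, ?_⟩
    · filter_upwards [vm.coeFn_toLp] with x hx
      rw [hx]
    · intro x hx y hy
      have : ∫ z in y..x, w z = ∫ z in y..x, w' z := by
        apply intervalIntegral.integral_congr
        intro z hz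
        have hz' : z ∈ Ioo (0:ℝ) 1 := by
          rw [uIcc, mem_Icc] at hz
          exact ⟨lt_of_lt_of_le (lt_min hy.1 hx.1) hz.1, lt_of_le_of_lt hz.2 (max_lt hy.2 hx.2)⟩
        simp [hw', hz']
      rw [this]
      simp only [hg]
      rw [← intervalIntegral.integral_interval_sub_left (a := 0) (b := x) (c := y) hw'i.intervalIntegrable hw'i.intervalIntegrable]
      ring
  have : v = vm.toLp := by
    apply eS_ext
    intro k
    have h1 := h k
    have h2 := inner_dom key k
    have h3 := lam_pos k
    have : lam k * inner ℝ (eS k) v = lam k * inner ℝ (eS k) vm.toLp := by linarith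
    exact mul_left_cancel₀ h3.ne' this
  rw [this]
  exact key

theorem scal_energy {c ρ : ℝ → ℝ} {l L t : ℝ} (hL : 0 < L) (hLl : L ≤ l) (ht : 0 ≤ t)
    (hc : ContinuousOn c (Icc 0 t)) (hρ : IntervalIntegrable ρ volume 0 t)
    (hρ2 : IntervalIntegrable (fun s => ρ s ^ 2) volume 0 t)
    (heq : ∀ s ∈ Icc 0 t, c s = c 0 + ∫ z in (0:ℝ)..s, (ρ z - l * c z)) :
    c t ^ 2 ≤ c 0 ^ 2 + 1 / (2 * L) * ∫ z in (0:ℝ)..t, ρ z ^ 2 := by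
  have hl : 0 < l := lt_of_lt_of_le hL hLl
  have hc' : ContinuousOn c (uIcc 0 t) := by rwa [uIcc_of_le ht]
  have hf : IntervalIntegrable (fun z => ρ z - l * c z) volume 0 t :=
    hρ.sub (hc'.intervalIntegrable.const_mul l)
  have e := prod_rule ht hf hf heq heq
  have le : ∫ s in (0:ℝ)..t, ((ρ s - l * c s) * c s + c s * (ρ s - l * c s))
      ≤ ∫ s in (0:ℝ)..t, 1 / (2 * L) * ρ s ^ 2 := by
    apply intervalIntegral.integral_mono_on ht
      ((hf.mul_continuousOn hc').add (hf.continuousOn_mul hc')) (hρ2.const_mul _)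
    intro s _
    have h1 : 1 / (2 * l) * ρ s ^ 2 ≤ 1 / (2 * L) * ρ s ^ 2 := by gcongr
    have h2 : 1 / (2 * l) * ρ s ^ 2 - 2 * c s * ρ s + 2 * l * c s ^ 2
        = 1 / (2 * l) * (ρ s - 2 * l * c s) ^ 2 := by field_simp; ring
    have h3 : 0 ≤ 1 / (2 * l) * (ρ s - 2 * l * c s) ^ 2 := by positivity
    nlinarith
  rw [intervalIntegral.integral_const_mul] at le
  nlinarith

theorem scal_duhamel {c ρ : ℝ → ℝ} {l t : ℝ} (ht : 0 ≤ t)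
    (hc : ContinuousOn c (Icc 0 t)) (hρ : IntervalIntegrable ρ volume 0 t)
    (heq : ∀ s ∈ Icc 0 t, c s = c 0 + ∫ z in (0:ℝ)..s, (ρ z - l * c z)) :
    c t * Real.exp (l * t) = c 0 + ∫ z in (0:ℝ)..t, Real.exp (l * z) * ρ z := by
  have hc' : ContinuousOn c (uIcc 0 t) := by rwa [uIcc_of_le ht]
  have hf : IntervalIntegrable (fun z => ρ z - l * c z) volume 0 t :=
    hρ.sub (hc'.intervalIntegrable.const_mul l)
  have e := prod_rule (G := fun s => Real.exp (l * s)) (g := fun s => Real.exp (l * s) * (l * 1)) ht hf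
    (by apply Continuous.intervalIntegrable; fun_prop) heq
    (by
      intro x hx
      rw [intervalIntegral.integral_eq_sub_of_hasDerivAt (f := fun x => Real.exp (l * x))
        (fun y _ => ((hasDerivAt_id' y).const_mul l).exp)
        (by apply Continuous.intervalIntegrable; fun_prop)]
      simp)
  simp only [mul_zero, Real.exp_zero, mul_one] at e
  rw [sub_eq_iff_eq_add] at e
  rw [e, add_comm]
  congr 1
  congr 1; ext s; ring

theorem scal_maxreg {c ρ : ℝ → ℝ} {l t : ℝ} (hl : 0 < l) (ht : 0 ≤ t)
    (hc : ContinuousOn c (Icc 0 t)) (hρ : IntervalIntegrable ρ volume 0 t)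
    (hρ2 : IntervalIntegrable (fun s => ρ s ^ 2) volume 0 t)
    (heq : ∀ s ∈ Icc 0 t, c s = c 0 + ∫ z in (0:ℝ)..s, (ρ z - l * c z)) :
    ∫ s in (0:ℝ)..t, s * (l * c s) ^ 2 ≤ c 0 ^ 2 + (1 / l + t) * ∫ z in (0:ℝ)..t, ρ z ^ 2 := by
  have hc' : ContinuousOn c (uIcc 0 t) := by rwa [uIcc_of_le ht]
  have hf : IntervalIntegrable (fun z => ρ z - l * c z) volume 0 t :=
    hρ.sub (hc'.intervalIntegrable.const_mul l)
  have hg : IntervalIntegrable (fun s => (ρ s - l * c s) * c s + c s * (ρ s - l * c s)) volume 0 t :=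
    (hf.mul_continuousOn hc').add (hf.continuousOn_mul hc')
  have e : ∀ s ∈ Icc 0 t, c s * c s = c 0 * c 0 +
      ∫ z in (0:ℝ)..s, ((ρ z - l * c z) * c z + c z * (ρ z - l * c z)) := by
    intro s hs
    have hsub : uIcc 0 s ⊆ uIcc 0 t := by
      rw [uIcc_of_le ht, uIcc_of_le hs.1]; exact Icc_subset_Icc le_rfl hs.2
    have := prod_rule hs.1 (hf.mono_set hsub) (hf.mono_set hsub)
      (fun x hx => heq x ⟨hx.1, hx.2.trans hs.2⟩) (fun x hx => heq x ⟨hx.1, hx.2.trans hs.2⟩)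
    linarith
  have ic2 : IntervalIntegrable (fun s => c s ^ 2) volume 0 t := (hc'.pow 2).intervalIntegrable
  have isc2 : IntervalIntegrable (fun s => s * (l * c s) ^ 2) volume 0 t :=
    (continuousOn_id.mul ((continuousOn_const.mul hc').pow 2)).intervalIntegrable
  have isr : IntervalIntegrable (fun s => s * ρ s ^ 2) volume 0 t :=
    hρ2.continuousOn_mul continuousOn_id
  have leA : ∫ s in (0:ℝ)..t, ((ρ s - l * c s) * c s + c s * (ρ s - l * c s))
      ≤ ∫ s in (0:ℝ)..t, (1 / l * ρ s ^ 2 - l * c s ^ 2) := by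
    apply intervalIntegral.integral_mono_on ht hg ((hρ2.const_mul _).sub (ic2.const_mul _))
    intro s _
    have h2 : 1 / l * ρ s ^ 2 - 2 * c s * ρ s + l * c s ^ 2
        = 1 / l * (ρ s - l * c s) ^ 2 := by field_simp; ring
    have h3 : 0 ≤ 1 / l * (ρ s - l * c s) ^ 2 := by positivity
    nlinarith
  rw [intervalIntegral.integral_sub (hρ2.const_mul _) (ic2.const_mul _),
    intervalIntegral.integral_const_mul, intervalIntegral.integral_const_mul] at leA
  have eA := e t ⟨ht, le_rfl⟩
  have eB := prod_rule (F := fun s => s) (f := fun _ => (1:ℝ)) (G := fun s => c s * c s) ht (by simp) hg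
    (by intro x hx; simp) e
  have leB : ∫ s in (0:ℝ)..t, (1 * (c s * c s) + s * ((ρ s - l * c s) * c s + c s * (ρ s - l * c s)))
      ≤ ∫ s in (0:ℝ)..t, (c s ^ 2 - 1 / l * (s * (l * c s) ^ 2) + 1 / l * (s * ρ s ^ 2)) := by
    apply intervalIntegral.integral_mono_on ht ((hc'.mul hc').intervalIntegrable.const_mul 1 |>.add (hg.continuousOn_mul continuousOn_id))
      ((ic2.sub (isc2.const_mul _)).add (isr.const_mul _))
    intro s hs
    have h2 : s * (1 / l * ρ s ^ 2 - 2 * c s * ρ s + l * c s ^ 2)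
        = s * (1 / l * (ρ s - l * c s) ^ 2) := by field_simp; ring
    have h4 : 1 / l * (s * (l * c s) ^ 2) = s * (l * c s ^ 2) := by field_simp
    have h3 : 0 ≤ s * (1 / l * (ρ s - l * c s) ^ 2) := by have := hs.1; positivity
    rw [h4]
    simp only [Pi.mul_apply, id]
    have h5 : s * (1 / l * ρ s ^ 2) = 1 / l * (s * ρ s ^ 2) := by ring
    nlinarith
  rw [intervalIntegral.integral_add (ic2.sub (isc2.const_mul _)) (isr.const_mul _),
    intervalIntegral.integral_sub ic2 (isc2.const_mul _), intervalIntegral.integral_const_mul,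
    intervalIntegral.integral_const_mul] at leB
  have leC : ∫ s in (0:ℝ)..t, s * ρ s ^ 2 ≤ ∫ s in (0:ℝ)..t, t * ρ s ^ 2 := by
    apply intervalIntegral.integral_mono_on ht isr (hρ2.const_mul _)
    intro s hs
    have := hs.2
    gcongr
  rw [intervalIntegral.integral_const_mul] at leC
  simp only [zero_mul, sub_zero] at eB
  have h5 : 0 ≤ t * (c t * c t) := mul_nonneg ht (mul_self_nonneg _)
  have h6 : 0 ≤ c t * c t := mul_self_nonneg _
  set X := ∫ s in (0:ℝ)..t, s * (l * c s) ^ 2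
  set Y := ∫ s in (0:ℝ)..t, c s ^ 2
  set R := ∫ s in (0:ℝ)..t, ρ s ^ 2
  set R' := ∫ s in (0:ℝ)..t, s * ρ s ^ 2
  have k1 : 0 ≤ Y - 1 / l * X + 1 / l * R' := by linarith
  have k2 : X ≤ l * Y + R' := by
    have := mul_nonneg hl.le k1
    have h7 : l * (Y - 1 / l * X + 1 / l * R') = l * Y - X + R' := by field_simp
    linarith
  have k3 : l * Y ≤ c 0 ^ 2 + 1 / l * R := by linarith
  linarith

structure Mild (u r : ℝ → Hsp) : Prop where
  cont : ContinuousOn u (Ici 0)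
  mem : ∀ T, 0 < T → MemLp r 2 (volume.restrict (Ioo 0 T))
  eq : ∀ k t, 0 ≤ t → inner ℝ (eS k) (u t) = inner ℝ (eS k) (u 0) +
    ∫ s in (0:ℝ)..t, (inner ℝ (eS k) (r s) - lam k * inner ℝ (eS k) (u s))

theorem ii_memLp {E : Type*} [NormedAddCommGroup E] {r : ℝ → E} (h : ∀ T, 0 < T → MemLp r 2 (volume.restrict (Ioo 0 T)))
    {t : ℝ} (ht : 0 ≤ t) : IntervalIntegrable r volume 0 t := by
  rcases ht.eq_or_lt with rfl | ht'
  · simp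
  rw [intervalIntegrable_iff_integrableOn_Ioo_of_le ht]
  exact (h t ht').integrable (by norm_num)

theorem ii_memLp_sq {E : Type*} [NormedAddCommGroup E] {r : ℝ → E} (h : ∀ T, 0 < T → MemLp r 2 (volume.restrict (Ioo 0 T)))
    {t : ℝ} (ht : 0 ≤ t) : IntervalIntegrable (fun s => ‖r s‖^2) volume 0 t := by
  rcases ht.eq_or_lt with rfl | ht'
  · simp
  rw [intervalIntegrable_iff_integrableOn_Ioo_of_le ht]
  exact (h t ht').integrable_norm_pow (by norm_num)

theorem memLp_inner {r : ℝ → Hsp} (h : ∀ T, 0 < T → MemLp r 2 (volume.restrict (Ioo 0 T)))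
   (v : Hsp) : ∀ T, 0 < T → MemLp (fun s => inner ℝ v (r s)) 2 (volume.restrict (Ioo 0 T)) :=
  fun T hT => (innerSL ℝ v).comp_memLp' (h T hT)

theorem memLp_inner_sq {r : ℝ → Hsp} (h : ∀ T, 0 < T → MemLp r 2 (volume.restrict (Ioo 0 T)))
   (v : Hsp) {t : ℝ} (ht : 0 ≤ t) : IntervalIntegrable (fun s => (inner ℝ v (r s))^2) volume 0 t := by
  have := ii_memLp_sq (memLp_inner h v) ht
  simpa using this

theorem bessel (f : Hsp) (s : Finset ℕ) : ∑ k ∈ s, (inner ℝ (eS k) f)^2 ≤ ‖f‖^2 :=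
  sum_le_hasSum s (fun _ _ => sq_nonneg _) (parseval f)


theorem Mild.ccont {u r : ℝ → Hsp} (h : Mild u r) (k : ℕ) (t : ℝ) : ContinuousOn (fun s => inner ℝ (eS k) (u s)) (Icc 0 t) :=
  ((innerSL ℝ (eS k)).continuous.comp_continuousOn h.cont).mono (fun _ hx => hx.1)

theorem Mild.int_sum {u r : ℝ → Hsp} (h : Mild u r) {t : ℝ} (ht : 0 ≤ t) (s : Finset ℕ) :
    ∑ k ∈ s, ∫ z in (0:ℝ)..t, (inner ℝ (eS k) (r z))^2 ≤ ∫ z in (0:ℝ)..t, ‖r z‖^2 := by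
  rw [← intervalIntegral.integral_finsetSum (fun k _ => memLp_inner_sq h.mem _ ht)]
  apply intervalIntegral.integral_mono_on ht _ (ii_memLp_sq h.mem ht)
  · intro z _
    exact bessel _ _
  · have := IntervalIntegrable.sum s (fun k _ => memLp_inner_sq h.mem (eS k) ht)
    simpa [Finset.sum_fn] using this

theorem Mild.energy {u r : ℝ → Hsp} (h : Mild u r) {t L : ℝ} (ht : 0 ≤ t) (hL : 0 < L) (s : Finset ℕ) (hs : ∀ k ∈ s, L ≤ lam k) :
    ∑ k ∈ s, (inner ℝ (eS k) (u t))^2 ≤ ‖u 0‖^2 + 1 / (2 * L) * ∫ z in (0:ℝ)..t, ‖r z‖^2 := by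
  calc _ ≤ ∑ k ∈ s, ((inner ℝ (eS k) (u 0))^2 + 1 / (2 * L) * ∫ z in (0:ℝ)..t, (inner ℝ (eS k) (r z))^2) := by
        apply Finset.sum_le_sum
        intro k hk
        exact scal_energy hL (hs k hk) ht (h.ccont k t) (ii_memLp (memLp_inner h.mem _) ht)
          (memLp_inner_sq h.mem _ ht) (fun s hs => h.eq k s hs.1)
    _ ≤ _ := by
        rw [Finset.sum_add_distrib, ← Finset.mul_sum]
        gcongr
        · exact bessel _ _
        · exact h.int_sum ht s

theorem Mild.duhamel {u r : ℝ → Hsp} (h : Mild u r) (k : ℕ) {t : ℝ} (ht : 0 ≤ t) :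
    inner ℝ (eS k) (u t) * Real.exp (lam k * t) = inner ℝ (eS k) (u 0) +
      ∫ z in (0:ℝ)..t, Real.exp (lam k * z) * inner ℝ (eS k) (r z) :=
  scal_duhamel ht (h.ccont k t) (ii_memLp (memLp_inner h.mem _) ht) (fun s hs => h.eq k s hs.1)

theorem Mild.maxreg_sum {u r : ℝ → Hsp} (h : Mild u r) {t : ℝ} (ht : 0 ≤ t) (s : Finset ℕ) :
    ∑ k ∈ s, ∫ z in (0:ℝ)..t, z * (lam k * inner ℝ (eS k) (u z))^2
      ≤ ‖u 0‖^2 + (1 / lam 0 + t) * ∫ z in (0:ℝ)..t, ‖r z‖^2 := by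
  calc _ ≤ ∑ k ∈ s, ((inner ℝ (eS k) (u 0))^2 + (1 / lam 0 + t) * ∫ z in (0:ℝ)..t, (inner ℝ (eS k) (r z))^2) := by
        apply Finset.sum_le_sum
        intro k hk
        have h1 := scal_maxreg (lam_pos k) ht (h.ccont k t) (ii_memLp (memLp_inner h.mem (eS k)) ht)
          (memLp_inner_sq h.mem _ ht) (fun s hs => h.eq k s hs.1)
        refine h1.trans ?_
        have := lam_pos 0
        have h2 : lam 0 ≤ lam k := lam_strictMono.monotone (Nat.zero_le k)
        have h3 : 0 ≤ ∫ z in (0:ℝ)..t, (inner ℝ (eS k) (r z))^2 :=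
          intervalIntegral.integral_nonneg ht (fun _ _ => sq_nonneg _)
        gcongr
    _ ≤ _ := by
        rw [Finset.sum_add_distrib, ← Finset.mul_sum]
        have := lam_pos 0
        gcongr
        · exact bessel _ _
        · exact h.int_sum ht s

theorem IsStrongSolutionWith.mild {b ω : ℝ → ℝ} {u r u' uxx : ℝ → Hsp}
    (h : IsStrongSolutionWith b ω 0 u r u' uxx) : Mild u r := by
  refine ⟨h.cont, h.rmem, ?_⟩
  intro k t ht
  rcases ht.eq_or_lt with rfl | ht'
  · simp
  have hcc : ContinuousOn (fun s => inner ℝ (eS k) (u s)) (Icc 0 t) :=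
    ((innerSL ℝ (eS k)).continuous.comp_continuousOn h.cont).mono (fun _ hx => hx.1)
  set f : ℝ → ℝ := fun s => inner ℝ (eS k) (r s) - lam k * inner ℝ (eS k) (u s) with hf
  have hfi : IntervalIntegrable f volume 0 t := by
    apply (ii_memLp (memLp_inner h.rmem _) ht).sub
    apply IntervalIntegrable.const_mul
    apply ContinuousOn.intervalIntegrable
    rwa [uIcc_of_le ht]
  have hsub : ∀ x ∈ Icc (0:ℝ) t, IntervalIntegrable f volume 0 x := by
    intro x hx
    apply hfi.mono_set
    rw [uIcc_of_le ht, uIcc_of_le hx.1]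
    exact Icc_subset_Icc le_rfl hx.2
  have key : EqOn (fun s => inner ℝ (eS k) (u s) - ∫ z in (0:ℝ)..s, f z)
      (fun _ => inner ℝ (eS k) (u t) - ∫ z in (0:ℝ)..t, f z) (Ioc 0 t) := by
    intro s hs
    rcases hs.2.eq_or_lt with rfl | hst
    · rfl
    obtain ⟨hi, he⟩ := h.fund s t hs.1 hst
    have e1 : inner ℝ (eS k) (u t) = inner ℝ (eS k) (u s) + ∫ z in s..t, inner ℝ (eS k) (u' z) := by
      rw [he t ⟨hs.2, le_rfl⟩, inner_add_right]
      congr 1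
      exact ((innerSL ℝ (eS k)).intervalIntegral_comp_comm hi).symm
    have e2 : ∫ z in s..t, inner ℝ (eS k) (u' z) = ∫ z in s..t, f z := by
      apply intervalIntegral.integral_congr_ae
      have h1 := (ae_restrict_iff' measurableSet_Ioi).1 (h.eq.and h.dom)
      filter_upwards [h1] with z hz hzm
      rw [uIoc_of_le hs.2] at hzm
      obtain ⟨a, b⟩ := hz (hs.1.trans hzm.1)
      rw [a, inner_add_right, inner_dom b, hf]
      ring
    have e3 := intervalIntegral.integral_add_adjacent_intervals (hsub s ⟨hs.1.le, hs.2⟩)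
      ((hsub s ⟨hs.1.le, hs.2⟩).symm.trans hfi)
    simp only
    linarith
  have hprim : ContinuousOn (fun s => ∫ z in (0:ℝ)..s, f z) (Icc 0 t) := by
    have := intervalIntegral.continuousOn_primitive_interval' hfi (a := 0) (by simp)
    rwa [uIcc_of_le ht] at this
  have key2 := key.of_subset_closure (hcc.sub hprim) continuousOn_const (t := Icc 0 t)
    Ioc_subset_Icc_self (by rw [closure_Ioc ht'.ne])
  have := key2 (left_mem_Icc.2 ht)
  simp only [intervalIntegral.integral_same] at this
  linarith

theorem Mild.sub {u r v q : ℝ → Hsp} (h : Mild u r) (h' : Mild v q) :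
    Mild (fun t => u t - v t) (fun t => r t - q t) := by
  refine ⟨h.cont.sub h'.cont, fun T hT => (h.mem T hT).sub (h'.mem T hT), ?_⟩
  intro k t ht
  have hi : ∀ {u r : ℝ → Hsp}, Mild u r → IntervalIntegrable
      (fun s => inner ℝ (eS k) (r s) - lam k * inner ℝ (eS k) (u s)) volume 0 t := by
    intro u r h
    apply (ii_memLp (memLp_inner h.mem _) ht).sub
    apply IntervalIntegrable.const_mul
    apply ContinuousOn.intervalIntegrable
    rw [uIcc_of_le ht]
    exact h.ccont k t
  simp only [inner_sub_right]
  rw [h.eq k t ht, h'.eq k t ht]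
  have e : ∀ s, inner ℝ (eS k) (r s) - inner ℝ (eS k) (q s)
      - lam k * (inner ℝ (eS k) (u s) - inner ℝ (eS k) (v s))
      = (inner ℝ (eS k) (r s) - lam k * inner ℝ (eS k) (u s))
        - (inner ℝ (eS k) (q s) - lam k * inner ℝ (eS k) (v s)) := by intro s; ring
  simp_rw [e]
  rw [intervalIntegral.integral_sub (hi h) (hi h')]
  ring

open Classical in
def uxxOf (u : ℝ → Hsp) (t : ℝ) : Hsp :=
  if h : Memℓp (fun k => -lam k * inner ℝ (eS k) (u t)) 2 then hB.repr.symm ⟨_, h⟩ else 0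

theorem Mild.maxreg {u r : ℝ → Hsp} (h : Mild u r) :
    ∃ w : ℝ → Hsp,
      (∀ᵐ t ∂(volume.restrict (Ioi (0:ℝ))), ∀ k, inner ℝ (eS k) (w t) = - lam k * inner ℝ (eS k) (u t)) ∧
      ∀ T1 T2, 0 < T1 → T1 < T2 → IntervalIntegrable w volume T1 T2 := by
  have hmeas : ∀ k, AEStronglyMeasurable (fun t => inner ℝ (eS k) (u t)) (volume.restrict (Ioi (0:ℝ))) := by
    intro k
    apply ContinuousOn.aestronglyMeasurable _ measurableSet_Ioi
    exact ((innerSL ℝ (eS k)).continuous.comp_continuousOn h.cont).mono Ioi_subset_Ici_self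
  set q : ℕ → ℝ → ℝ := fun k z => z * (lam k * inner ℝ (eS k) (u z))^2 with hq
  have hfin : ∀ T, 0 < T → ∫⁻ t in Ioo 0 T, ∑' k, ENNReal.ofReal (q k t) < ⊤ := by
    intro T hT
    have hsub : Ioo 0 T ⊆ Ioi (0:ℝ) := Ioo_subset_Ioi_self
    rw [lintegral_tsum]
    · refine lt_of_le_of_lt ?_ (ENNReal.ofReal_lt_top (r := ‖u 0‖^2 + (1 / lam 0 + T) * ∫ z in (0:ℝ)..T, ‖r z‖^2))
      rw [ENNReal.tsum_eq_iSup_sum]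
      apply iSup_le
      intro s
      have e : ∀ k, ∫⁻ t in Ioo 0 T, ENNReal.ofReal (q k t) = ENNReal.ofReal (∫ z in (0:ℝ)..T, q k z) := by
        intro k
        rw [intervalIntegral.integral_of_le hT.le, integral_Ioc_eq_integral_Ioo,
          ofReal_integral_eq_lintegral_ofReal]
        · rw [← IntegrableOn, ← intervalIntegrable_iff_integrableOn_Ioo_of_le hT.le]
          apply ContinuousOn.intervalIntegrable
          rw [uIcc_of_le hT.le]
          exact continuousOn_id.mul ((continuousOn_const.mul (h.ccont k T)).pow 2)
        · filter_upwards [ae_restrict_mem measurableSet_Ioo] with z hz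
          have := hz.1
          simp only [hq, Pi.zero_apply]
          positivity
      simp_rw [e]
      rw [← ENNReal.ofReal_sum_of_nonneg]
      · apply ENNReal.ofReal_le_ofReal
        exact h.maxreg_sum hT.le s
      · intro k _
        apply intervalIntegral.integral_nonneg hT.le
        intro z hz
        have := hz.1
        simp only [hq]
        positivity
    · intro k
      apply AEMeasurable.ennreal_ofReal
      have := (hmeas k).mono_set hsub
      exact (aemeasurable_id.mul ((this.aemeasurable.const_mul _).pow_const 2))
  -- a.e. summability
  have hae : ∀ᵐ t ∂(volume.restrict (Ioi (0:ℝ))), ∑' k, ENNReal.ofReal (q k t) < ⊤ := by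
    rw [ae_restrict_iff' measurableSet_Ioi]
    have : ∀ n : ℕ, ∀ᵐ t, t ∈ Ioo (0:ℝ) (n+1) → ∑' k, ENNReal.ofReal (q k t) < ⊤ := by
      intro n
      rw [← ae_restrict_iff' measurableSet_Ioo]
      apply ae_lt_top'
      · apply AEMeasurable.tsum
        intro k
        apply AEMeasurable.ennreal_ofReal
        have := (hmeas k).mono_set (Ioo_subset_Ioi_self : Ioo (0:ℝ) (n+1) ⊆ Ioi 0)
        exact (aemeasurable_id.mul ((this.aemeasurable.const_mul _).pow_const 2))
      · exact (hfin (n+1) (by positivity)).ne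
    filter_upwards [ae_all_iff.2 this] with t ht ht0
    obtain ⟨n, hn⟩ := exists_nat_gt t
    exact ht n ⟨ht0, by linarith⟩
  have hmem : ∀ t, 0 < t → ∑' k, ENNReal.ofReal (q k t) < ⊤ →
      (Summable (fun k => (lam k * inner ℝ (eS k) (u t))^2) ∧
      Memℓp (fun k => -lam k * inner ℝ (eS k) (u t)) 2) := by
    intro t ht hlt
    have h0 : ∀ k, 0 ≤ q k t := by intro k; simp only [hq]; positivity
    have hs : Summable (fun k => q k t) := by
      have := ENNReal.summable_toReal hlt.ne
      simpa only [ENNReal.toReal_ofReal (h0 _)] using this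
    have hs2 : Summable (fun k => (lam k * inner ℝ (eS k) (u t))^2) := by
      have := hs.mul_left t⁻¹
      refine this.congr ?_
      intro k
      simp only [hq]
      field_simp
    refine ⟨hs2, ?_⟩
    rw [memℓp_gen_iff (by norm_num)]
    refine hs2.congr ?_
    intro k
    simp [← abs_mul]
  have hco : ∀ t, 0 < t → ∑' k, ENNReal.ofReal (q k t) < ⊤ →
      ∀ k, inner ℝ (eS k) (uxxOf u t) = -lam k * inner ℝ (eS k) (u t) := by
    intro t ht hlt k
    have hm := (hmem t ht hlt).2
    rw [uxxOf, dif_pos hm, ← hB_coe, ← hB.repr_apply_apply, LinearIsometryEquiv.apply_symm_apply]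
    simp [hB_coe]
  have hwm : AEStronglyMeasurable (uxxOf u) (volume.restrict (Ioi (0:ℝ))) := by
    apply aestronglyMeasurable_of_tendsto_ae Filter.atTop
      (f := fun N t => ∑ k ∈ Finset.range N, (-lam k * inner ℝ (eS k) (u t)) • eS k)
    · intro N
      have := Finset.aestronglyMeasurable_sum (Finset.range N)
        (f := fun k t => (-lam k * inner ℝ (eS k) (u t)) • eS k)
        (μ := volume.restrict (Ioi (0:ℝ)))
        (fun k _ => ((hmeas k).const_mul _).smul_const _)
      simpa [Finset.sum_fn] using this
    · filter_upwards [hae, ae_restrict_mem measurableSet_Ioi] with t ht ht0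
      have := (hB.hasSum_repr (uxxOf u t)).tendsto_sum_nat
      simp only [hB.repr_apply_apply, hB_coe, hco t ht0 ht] at this
      exact this
  refine ⟨uxxOf u, ?_, ?_⟩
  · filter_upwards [hae, ae_restrict_mem measurableSet_Ioi] with t ht ht0
    exact hco t ht0 ht
  · intro T1 T2 h1 h12
    rw [intervalIntegrable_iff_integrableOn_Ioo_of_le h12.le]
    have hT2 : 0 < T2 := h1.trans h12
    have hI : IntegrableOn (fun t => t * ‖uxxOf u t‖^2) (Ioo 0 T2) := by
      refine ⟨?_, ?_⟩
      · exact aestronglyMeasurable_id.mul ((hwm.mono_set Ioo_subset_Ioi_self).norm.pow 2)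
      · rw [hasFiniteIntegral_iff_ofReal]
        · refine lt_of_le_of_lt (le_of_eq ?_) (hfin T2 hT2)
          apply lintegral_congr_ae
          have := ae_restrict_of_ae_restrict_of_subset (Ioo_subset_Ioi_self : Ioo (0:ℝ) T2 ⊆ Ioi 0) hae
          filter_upwards [this, ae_restrict_mem measurableSet_Ioo] with t ht ht0
          have hp := (parseval (uxxOf u t)).mul_left t
          simp only [hco t ht0.1 ht] at hp
          have hp2 : HasSum (fun k => q k t) (t * ‖uxxOf u t‖^2) := by
            refine hp.congr_fun ?_
            intro k
            simp only [hq]; ring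
          rw [← hp2.tsum_eq, ENNReal.ofReal_tsum_of_nonneg _ hp2.summable]
          intro k
          have := ht0.1
          simp only [hq]; positivity
        · filter_upwards [ae_restrict_mem measurableSet_Ioo] with t ht0
          have := ht0.1
          simp only [Pi.zero_apply]; positivity
    have hI2 : IntegrableOn (fun t => 1 + T1⁻¹ * (t * ‖uxxOf u t‖^2)) (Ioo T1 T2) :=
      (integrableOn_const (by simp)).add ((hI.mono_set (Ioo_subset_Ioo_left h1.le)).const_mul _)
    apply Integrable.mono' hI2 (hwm.mono_set (Ioo_subset_Ioi_self.trans (Ioi_subset_Ioi h1.le)))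
    filter_upwards [ae_restrict_mem measurableSet_Ioo] with t ht0
    have a1 : 1 ≤ T1⁻¹ * t := by
      rw [inv_mul_eq_div, le_div_iff₀ h1]; linarith [ht0.1]
    have a2 : 0 ≤ ‖uxxOf u t‖ := norm_nonneg _
    have a3 : T1⁻¹ * (t * ‖uxxOf u t‖^2) = (T1⁻¹ * t) * ‖uxxOf u t‖^2 := by ring
    rw [a3]
    nlinarith [sq_nonneg (‖uxxOf u t‖ - 1), sq_nonneg (‖uxxOf u t‖)]

theorem Mild.strong {u r : ℝ → Hsp} (h : Mild u r) {b ω : ℝ → ℝ}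
    (hsel : ∀ᵐ t ∂(volume.restrict (Ioi (0:ℝ))), ∀ᵐ x ∂μ01,
      ∃ h ∈ heaviside (u t x), r t x = b t * h + ω t * u t x) : IsStrongSolution b ω 0 u := by
  obtain ⟨w, hw, hwi⟩ := h.maxreg
  refine ⟨r, fun t => r t + w t, w, h.cont, h.mem, hsel, ?_, ?_, ?_⟩
  · filter_upwards [hw] with t ht
    exact dom_of_inner ht
  · exact Filter.Eventually.of_forall fun t => rfl
  · intro T1 T2 h1 h12
    have hr : ∀ t, T1 ≤ t → IntervalIntegrable r volume T1 t := fun t ht =>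
      (ii_memLp h.mem h1.le).symm.trans (ii_memLp h.mem (h1.le.trans ht))
    have hi : ∀ t, T1 ≤ t → IntervalIntegrable (fun t => r t + w t) volume T1 t := by
      intro t ht
      rcases ht.eq_or_lt with rfl | ht'
      · simp
      exact (hr t ht).add (hwi T1 t h1 ht')
    refine ⟨hi T2 h12.le, ?_⟩
    intro t ht
    apply eS_ext
    intro k
    rw [inner_add_right]
    have e1 : inner ℝ (eS k) (∫ s in T1..t, (r s + w s)) = ∫ s in T1..t, inner ℝ (eS k) (r s + w s) :=
      ((innerSL ℝ (eS k)).intervalIntegral_comp_comm (hi t ht.1)).symm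
    have e2 : ∫ z in T1..t, inner ℝ (eS k) (r z + w z)
        = ∫ z in T1..t, (inner ℝ (eS k) (r z) - lam k * inner ℝ (eS k) (u z)) := by
      apply intervalIntegral.integral_congr_ae
      have h1' := (ae_restrict_iff' measurableSet_Ioi).1 hw
      filter_upwards [h1'] with z hz hzm
      rw [uIoc_of_le ht.1] at hzm
      rw [inner_add_right, hz (h1.trans hzm.1) k]
      ring
    have hi2 : ∀ t, 0 ≤ t → IntervalIntegrable
        (fun s => inner ℝ (eS k) (r s) - lam k * inner ℝ (eS k) (u s)) volume 0 t := by
      intro t ht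
      apply (ii_memLp (memLp_inner h.mem _) ht).sub
      apply IntervalIntegrable.const_mul
      apply ContinuousOn.intervalIntegrable
      rw [uIcc_of_le ht]
      exact h.ccont k t
    have ht0 : 0 ≤ t := h1.le.trans ht.1
    have e3 := intervalIntegral.integral_add_adjacent_intervals (hi2 T1 h1.le)
      ((hi2 T1 h1.le).symm.trans (hi2 t ht0))
    rw [e1, e2]
    have e4 := h.eq k t ht0
    have e5 := h.eq k T1 h1.le
    linarith

instance fact_two_ne_top : Fact ((2:ENNReal) ≠ ⊤) := ⟨by norm_num⟩

theorem weak_hilbert {X : Type*} [NormedAddCommGroup X] [InnerProductSpace ℝ X] [CompleteSpace X]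
    [TopologicalSpace.SeparableSpace X] (R : ℕ → X) (C : ℝ) (hR : ∀ n, ‖R n‖ ≤ C) :
    ∃ φ : ℕ → ℕ, StrictMono φ ∧ ∃ R0 : X, ∀ G : X,
      Filter.Tendsto (fun n => inner ℝ (R (φ n)) G) Filter.atTop (nhds (inner ℝ R0 G)) := by
  have hc := WeakDual.isSeqCompact_closedBall ℝ X 0 C
  obtain ⟨a, -, φ, hφ, hl⟩ := @hc (fun n => StrongDual.toWeakDual (InnerProductSpace.toDual ℝ X (R n))) (by
    intro n
    have h1 : InnerProductSpace.toDual ℝ X (R n) ∈ Metric.closedBall (0 : StrongDual ℝ X) C := by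
      rw [mem_closedBall_iff_norm, sub_zero]
      exact le_trans (le_of_eq ((InnerProductSpace.toDual ℝ X).norm_map (R n))) (hR n)
    exact h1)
  refine ⟨φ, hφ, (InnerProductSpace.toDual ℝ X).symm (WeakDual.toStrongDual a), fun G => ?_⟩
  have := (WeakBilin.tendsto_iff_forall_eval_tendsto _ ContinuousLinearMap.coe_injective).1 hl G
  rw [InnerProductSpace.toDual_symm_apply]
  exact this

def pw (K : ℝ → ℝ) (t : ℝ) : ℝ := (1 + K t) * Real.exp t

theorem weak_compact (rn : ℕ → ℝ → Hsp) (K : ℝ → ℝ) (hK : Continuous K) (hK0 : ∀ t, 0 ≤ K t)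
    (hm : ∀ n, AEStronglyMeasurable (rn n) (volume.restrict (Ioi (0:ℝ))))
    (hb : ∀ n, ∀ᵐ t ∂(volume.restrict (Ioi (0:ℝ))), ‖rn n t‖ ≤ K t) :
    ∃ φ : ℕ → ℕ, StrictMono φ ∧ ∃ r : ℝ → Hsp,
      (∀ T, 0 < T → MemLp r 2 (volume.restrict (Ioo 0 T))) ∧
      ∀ T, 0 < T → ∀ g : ℝ → Hsp, MemLp g 2 (volume.restrict (Ioo 0 T)) →
        Filter.Tendsto (fun n => ∫ s in Ioo 0 T, inner ℝ (rn (φ n) s) (g s)) Filter.atTop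
          (nhds (∫ s in Ioo 0 T, inner ℝ (r s) (g s))) := by
  have hpc : Continuous (pw K) := by unfold pw; fun_prop
  have hpp : ∀ t, 0 < pw K t := fun t => mul_pos (by linarith [hK0 t]) (Real.exp_pos t)
  set R : ℕ → ℝ → Hsp := fun n t => (pw K t)⁻¹ • rn n t with hRdef
  have hexp : MemLp (fun t : ℝ => Real.exp (-t)) 2 (volume.restrict (Ioi (0:ℝ))) := by
    rw [memLp_two_iff_integrable_sq (by fun_prop)]
    have := exp_neg_integrableOn_Ioi 0 (b := 2) (by norm_num)
    refine this.congr (Filter.Eventually.of_forall fun t => ?_)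
    simp only [← Real.exp_nat_mul]
    congr 1; push_cast; ring
  have hpic : Continuous fun t => (pw K t)⁻¹ := hpc.inv₀ (fun t => (hpp t).ne')
  have hRm : ∀ n, AEStronglyMeasurable (R n) (volume.restrict (Ioi (0:ℝ))) := fun n =>
    hpic.aestronglyMeasurable.smul (hm n)
  have hRb : ∀ n, ∀ᵐ t ∂(volume.restrict (Ioi (0:ℝ))), ‖R n t‖ ≤ Real.exp (-t) := by
    intro n
    filter_upwards [hb n] with t ht
    rw [hRdef, norm_smul, norm_inv, Real.norm_of_nonneg (hpp t).le, inv_mul_le_iff₀ (hpp t), pw, mul_assoc,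
      ← Real.exp_add]
    simp
    linarith
  have hRL : ∀ n, MemLp (R n) 2 (volume.restrict (Ioi (0:ℝ))) := fun n =>
    hexp.mono (hRm n) ((hRb n).mono fun t ht => ht.trans (le_abs_self _))
  obtain ⟨φ, hφ, R0, hR0⟩ := weak_hilbert (fun n => (hRL n).toLp (R n)) ‖hexp.toLp _‖ (by
    intro n
    apply Lp.norm_le_norm_of_ae_le
    filter_upwards [(hRL n).coeFn_toLp, hexp.coeFn_toLp, hRb n] with t h1 h2 h3
    rw [h1, h2]
    exact h3.trans (le_abs_self _))
  refine ⟨φ, hφ, fun t => pw K t • R0 t, ?_, ?_⟩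
  · intro T hT
    obtain ⟨C, hC⟩ := (isCompact_Icc (a := (0:ℝ)) (b := T)).exists_bound_of_continuousOn hpc.continuousOn
    have h1 : MemLp R0 2 (volume.restrict (Ioo (0:ℝ) T)) := (Lp.memLp R0).mono_measure
      (Measure.restrict_mono Ioo_subset_Ioi_self le_rfl)
    refine MemLp.of_le_mul (c := C) h1 (hpc.aestronglyMeasurable.smul h1.1) ?_
    filter_upwards [ae_restrict_mem measurableSet_Ioo] with t ht
    rw [norm_smul]
    gcongr
    exact hC t (Ioo_subset_Icc_self ht)
  · intro T hT g hg
    obtain ⟨C, hC⟩ := (isCompact_Icc (a := (0:ℝ)) (b := T)).exists_bound_of_continuousOn hpc.continuousOn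
    have hG0 : MemLp (fun t => pw K t • g t) 2 (volume.restrict (Ioo (0:ℝ) T)) := by
      refine MemLp.of_le_mul (c := C) hg (hpc.aestronglyMeasurable.smul hg.1) ?_
      filter_upwards [ae_restrict_mem measurableSet_Ioo] with t ht
      rw [norm_smul]
      gcongr
      exact hC t (Ioo_subset_Icc_self ht)
    have hG : MemLp ((Ioo (0:ℝ) T).indicator (fun t => pw K t • g t)) 2 (volume.restrict (Ioi (0:ℝ))) := by
      rw [memLp_indicator_iff_restrict measurableSet_Ioo, Measure.restrict_restrict measurableSet_Ioo,
        inter_eq_left.2 Ioo_subset_Ioi_self]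
      exact hG0
    have key := hR0 (hG.toLp _)
    have conv : ∀ f : ℝ → Hsp, ∀ q : Lp Hsp 2 (volume.restrict (Ioi (0:ℝ))), (∀ᵐ t ∂(volume.restrict (Ioi (0:ℝ))), f t = pw K t • q t) →
        inner ℝ q (hG.toLp _) = ∫ s in Ioo 0 T, inner ℝ (f s) (g s) := by
      intro f q hq
      rw [L2.inner_def]
      have : ∫ s in Ioo 0 T, inner ℝ (f s) (g s) = ∫ s in Ioi 0, (Ioo (0:ℝ) T).indicator (fun s => inner ℝ (f s) (g s)) s := by
        rw [integral_indicator measurableSet_Ioo, Measure.restrict_restrict measurableSet_Ioo,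
          inter_eq_left.2 Ioo_subset_Ioi_self]
      rw [this]
      apply integral_congr_ae
      filter_upwards [hq, hG.coeFn_toLp] with t h1 h2
      rw [h2]
      by_cases ht : t ∈ Ioo (0:ℝ) T
      · simp only [indicator_of_mem ht]
        rw [h1, real_inner_smul_left, real_inner_smul_right]
      · simp only [indicator_of_notMem ht, inner_zero_right]
    rw [← conv (fun t => pw K t • R0 t) R0 (Filter.Eventually.of_forall fun _ => rfl)]
    refine key.congr fun n => ?_
    apply conv
    filter_upwards [(hRL (φ n)).coeFn_toLp] with t ht
    rw [ht, hRdef]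
    simp only
    rw [smul_inv_smul₀ (hpp t).ne']

structure WConv (rn : ℕ → ℝ → Hsp) (r : ℝ → Hsp) (K : ℝ → ℝ) : Prop where
  Kc : Continuous K
  K0 : ∀ t, 0 ≤ K t
  meas : ∀ n, AEStronglyMeasurable (rn n) (volume.restrict (Ioi (0:ℝ)))
  bdd : ∀ n, ∀ᵐ t ∂(volume.restrict (Ioi (0:ℝ))), ‖rn n t‖ ≤ K t
  mem : ∀ T, 0 < T → MemLp r 2 (volume.restrict (Ioo 0 T))
  conv : ∀ T, 0 < T → ∀ g : ℝ → Hsp, MemLp g 2 (volume.restrict (Ioo 0 T)) →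
        Filter.Tendsto (fun n => ∫ s in Ioo 0 T, inner ℝ (rn n s) (g s)) Filter.atTop
          (nhds (∫ s in Ioo 0 T, inner ℝ (r s) (g s)))

theorem memLp_of_bdd {g : ℝ → Hsp} {E : Set ℝ} {T D : ℝ} (hE : E ⊆ Ioo 0 T)
    (hEm : MeasurableSet E)
    (hg : AEStronglyMeasurable g (volume.restrict E)) (hD : ∀ᵐ t ∂(volume.restrict E), ‖g t‖ ≤ D) (p : ENNReal) :
    MemLp g p (volume.restrict E) := by
  have : IsFiniteMeasure (volume.restrict E) := ⟨by
    rw [Measure.restrict_apply_univ]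
    exact (measure_mono hE).trans_lt (by simp)⟩
  exact MemLp.of_bound hg D hD

theorem WConv.memn {rn : ℕ → ℝ → Hsp} {r : ℝ → Hsp} {K : ℝ → ℝ} (h : WConv rn r K) (n : ℕ) {T : ℝ} {E : Set ℝ} (hE : E ⊆ Ioo 0 T)
    (hEm : MeasurableSet E) : MemLp (rn n) 2 (volume.restrict E) := by
  obtain ⟨C, hC⟩ := (isCompact_Icc (a := (0:ℝ)) (b := T)).exists_bound_of_continuousOn h.Kc.continuousOn
  have hEs : E ⊆ Ioi 0 := fun x hx => (hE hx).1
  have hle : volume.restrict E ≤ volume.restrict (Ioi (0:ℝ)) := Measure.restrict_mono hEs le_rfl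
  refine memLp_of_bdd (D := C) hE hEm ((h.meas n).mono_measure hle) ?_ 2
  filter_upwards [ae_mono hle (h.bdd n), ae_restrict_mem hEm] with t h1 h2
  exact h1.trans ((le_abs_self _).trans (hC t (Ioo_subset_Icc_self (hE h2))))

theorem inner_integrable {f g : ℝ → Hsp} {μ : Measure ℝ} (hf : MemLp f 2 μ) (hg : MemLp g 2 μ) :
    Integrable (fun s => inner ℝ (f s) (g s)) μ := by
  have := L2.integrable_inner (𝕜 := ℝ) (hf.toLp f) (hg.toLp g)
  refine this.congr ?_
  filter_upwards [hf.coeFn_toLp, hg.coeFn_toLp] with t h1 h2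
  rw [h1, h2]

theorem WConv.strong {rn : ℕ → ℝ → Hsp} {r : ℝ → Hsp} {K : ℝ → ℝ} (h : WConv rn r K)
    {T D : ℝ} (hT : 0 < T) {E : Set ℝ} (hE : E ⊆ Ioo 0 T) (hEm : MeasurableSet E)
    {gn : ℕ → ℝ → Hsp} {g : ℝ → Hsp}
    (hgn : ∀ n, AEStronglyMeasurable (gn n) (volume.restrict E))
    (hD : ∀ n, ∀ t ∈ E, ‖gn n t‖ ≤ D)
    (hg : AEStronglyMeasurable g (volume.restrict E))
    (hlim : ∀ t ∈ E, Filter.Tendsto (fun n => gn n t) Filter.atTop (nhds (g t))) :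
    Filter.Tendsto (fun n => ∫ s in E, inner ℝ (rn n s) (gn n s)) Filter.atTop
          (nhds (∫ s in E, inner ℝ (r s) (g s))) := by
  have hDg : ∀ t ∈ E, ‖g t‖ ≤ D := fun t ht =>
    le_of_tendsto (hlim t ht).norm (Filter.Eventually.of_forall fun n => hD n t ht)
  have aeE : ∀ {p : ℝ → Prop}, (∀ t ∈ E, p t) → ∀ᵐ t ∂(volume.restrict E), p t := fun hp =>
    (ae_restrict_mem hEm).mono hp
  have hgL := memLp_of_bdd hE hEm hg (aeE hDg) 2
  have hgnL := fun n => memLp_of_bdd hE hEm (hgn n) (aeE (hD n)) 2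
  obtain ⟨C, hC⟩ := (isCompact_Icc (a := (0:ℝ)) (b := T)).exists_bound_of_continuousOn h.Kc.continuousOn
  have hEs : E ⊆ Ioi 0 := fun x hx => (hE hx).1
  have hle : volume.restrict E ≤ volume.restrict (Ioi (0:ℝ)) := Measure.restrict_mono hEs le_rfl
  have : IsFiniteMeasure (volume.restrict E) := ⟨by
    rw [Measure.restrict_apply_univ]
    exact (measure_mono hE).trans_lt (by simp)⟩
  have hbd : ∀ n, ∀ᵐ t ∂(volume.restrict E), ‖rn n t‖ ≤ C := by
    intro n
    filter_upwards [ae_mono hle (h.bdd n), ae_restrict_mem hEm] with t h1 h2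
    exact h1.trans ((le_abs_self _).trans (hC t (Ioo_subset_Icc_self (hE h2))))
  have hC0 : 0 ≤ C := (norm_nonneg _).trans (hC 0 ⟨le_rfl, hT.le⟩)
  have h2 : Filter.Tendsto (fun n => ∫ s in E, inner ℝ (rn n s) (g s)) Filter.atTop
          (nhds (∫ s in E, inner ℝ (r s) (g s))) := by
    have hconv := h.conv T hT (E.indicator g) (by
      rw [memLp_indicator_iff_restrict hEm, Measure.restrict_restrict hEm, inter_eq_left.2 hE]
      exact hgL)
    have tr : ∀ f : ℝ → Hsp, ∫ s in Ioo 0 T, inner ℝ (f s) (E.indicator g s) = ∫ s in E, inner ℝ (f s) (g s) := by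
      intro f
      have : (fun s => inner ℝ (f s) (E.indicator g s)) = E.indicator (fun s => (inner ℝ (f s) (g s) : ℝ)) := by
        ext s
        by_cases hs : s ∈ E
        · simp [hs]
        · simp [hs]
      rw [this, integral_indicator hEm, Measure.restrict_restrict hEm, inter_eq_left.2 hE]
    simpa only [tr] using hconv
  have h1 : Filter.Tendsto (fun n => ∫ s in E, inner ℝ (rn n s) (gn n s - g s)) Filter.atTop (nhds (∫ s in E, (0:ℝ))) := by
    apply tendsto_integral_of_dominated_convergence (fun _ => C * (2 * D))
    · intro n
      exact (inner_integrable (h.memn n hE hEm) ((hgnL n).sub hgL)).1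
    · exact integrable_const _
    · intro n
      filter_upwards [hbd n, ae_restrict_mem hEm] with t ht hte
      refine (norm_inner_le_norm _ _).trans ?_
      have : ‖gn n t - g t‖ ≤ 2 * D := (norm_sub_le _ _).trans (by linarith [hD n t hte, hDg t hte])
      gcongr
    · filter_upwards [ae_all_iff.2 hbd, ae_restrict_mem hEm] with t ht hte
      have h0 : Filter.Tendsto (fun n => C * ‖gn n t - g t‖) Filter.atTop (nhds 0) := by
        have := (((hlim t hte).sub_const (g t)).norm).const_mul C
        simpa using this
      refine squeeze_zero_norm (fun n => ?_) h0
      refine (norm_inner_le_norm _ _).trans ?_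
      gcongr
      exact ht n
  have h3 := h1.add h2
  simp only [integral_zero, zero_add] at h3
  refine h3.congr fun n => ?_
  refine (integral_add (inner_integrable (h.memn n hE hEm) ((hgnL n).sub hgL)) (inner_integrable (h.memn n hE hEm) hgL)).symm.trans ?_
  congr 1
  ext s
  rw [← inner_add_right, Pi.sub_apply, sub_add_cancel]

theorem hull_bounds {b ω : ℝ → ℝ} {b0 b1 ω0 ω1 : ℝ} (hC : Cond1 b ω b0 b1 ω0 ω1)
    {σ0 : C(ℝ, ℝ × ℝ)} (hσ0 : ∀ t, σ0 t = (b t, ω t)) {σ : C(ℝ, ℝ × ℝ)} (hσ : σ ∈ hullSet σ0) (t : ℝ) :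
    σ t ∈ Icc b0 b1 ×ˢ Icc 0 ω1 := by
  have hcl : IsClosed {σ : C(ℝ, ℝ × ℝ) | σ t ∈ Icc b0 b1 ×ˢ Icc 0 ω1} :=
    (isClosed_Icc.prod isClosed_Icc).preimage (continuous_eval_const t)
  refine closure_minimal ?_ hcl hσ
  rintro _ ⟨s, rfl⟩
  show σ0 (t + s) ∈ Icc b0 b1 ×ˢ Icc 0 ω1
  rw [hσ0]
  exact ⟨⟨hC.blb _, hC.bub _⟩, ⟨hC.ω0nonneg.trans (hC.ωlb _), hC.ωub _⟩⟩

theorem heaviside_abs {s h : ℝ} (hh : h ∈ heaviside s) : |h| ≤ 1 := by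
  unfold heaviside at hh
  split_ifs at hh
  · rw [mem_singleton_iff.1 hh]; norm_num
  · exact abs_le.2 hh
  · rw [mem_singleton_iff.1 hh]; norm_num

theorem heaviside_sub {s h : ℝ} (hh : h ∈ heaviside s) (y : ℝ) : h * (y - s) ≤ |y| - |s| := by
  have h1 := abs_le.1 (heaviside_abs hh)
  have h2 : h * y ≤ |y| := by
    calc h * y ≤ |h * y| := le_abs_self _
      _ = |h| * |y| := abs_mul _ _
      _ ≤ 1 * |y| := by gcongr; exact heaviside_abs hh
      _ = |y| := one_mul _
  have h3 : h * s = |s| := by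
    unfold heaviside at hh
    split_ifs at hh with ha hb
    · rw [mem_singleton_iff.1 hh, abs_of_neg ha]; ring
    · simp [hb]
    · rw [mem_singleton_iff.1 hh, abs_of_nonneg (not_lt.1 ha)]; ring
  rw [mul_sub, h3]; linarith

theorem norm_le_of_sel {u r : Hsp} {b w b1 w1 : ℝ} (hb : 0 ≤ b) (hb1 : b ≤ b1) (hw : 0 ≤ w) (hw1 : w ≤ w1)
    (h : ∀ᵐ x ∂μ01, ∃ h ∈ heaviside (u x), r x = b * h + w * u x) : ‖r‖ ≤ b1 + w1 * ‖u‖ := by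
  have h1 : ‖r - w • u‖ ≤ b := by
    have := Lp.norm_le_of_ae_bound (f := r - w • u) (C := b) hb (by
      filter_upwards [h, Lp.coeFn_sub r (w • u), Lp.coeFn_smul w u] with x ⟨q, hq, hr⟩ e1 e2
      rw [e1, Pi.sub_apply, e2, Pi.smul_apply, hr, smul_eq_mul, add_sub_cancel_right, norm_mul,
        Real.norm_of_nonneg hb]
      exact mul_le_of_le_one_right hb (heaviside_abs hq))
    simpa [measureUnivNNReal] using this
  calc ‖r‖ = ‖(r - w • u) + w • u‖ := by rw [sub_add_cancel]
    _ ≤ ‖r - w • u‖ + ‖w • u‖ := norm_add_le _ _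
    _ ≤ b1 + w1 * ‖u‖ := by
      rw [norm_smul, Real.norm_of_nonneg hw]
      gcongr
      linarith

theorem Mild.norm_sq_le {u r : ℝ → Hsp} (h : Mild u r) {t : ℝ} (ht : 0 ≤ t) :
    ‖u t‖^2 ≤ ‖u 0‖^2 + 1 / (2 * lam 0) * ∫ z in (0:ℝ)..t, ‖r z‖^2 := by
  refine hasSum_le_of_sum_le (parseval (u t)) fun s => h.energy ht (lam_pos 0) s fun k _ => ?_
  exact lam_strictMono.monotone (Nat.zero_le k)

theorem gronwall_int {y : ℝ → ℝ} {A B T : ℝ} (hB : 0 ≤ B) (hT : 0 ≤ T) (hy : ContinuousOn y (Icc 0 T))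
    (h : ∀ t ∈ Icc 0 T, y t ≤ A + B * ∫ s in (0:ℝ)..t, y s) : y T ≤ A * Real.exp (B * T) := by
  set z : ℝ → ℝ := fun t => A + B * ∫ s in (0:ℝ)..t, y s with hz
  have hyi : IntervalIntegrable y volume 0 T := ContinuousOn.intervalIntegrable (by rwa [uIcc_of_le hT])
  have hzc : ContinuousOn z (Icc 0 T) := by
    have := intervalIntegral.continuousOn_primitive_interval (μ := volume) (f := y) (a := 0) (b := T) (by
      rw [uIcc_of_le hT]; exact hy.integrableOn_Icc)
    rw [uIcc_of_le hT] at this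
    exact continuousOn_const.add (continuousOn_const.mul this)
  have hder : ∀ t ∈ Ioo 0 T, HasDerivAt (fun t => z t * Real.exp (-(B * t))) ((B * y t) * Real.exp (-(B * t)) + z t * (Real.exp (-(B*t)) * (-B))) t := by
    intro t ht
    have h1 : HasDerivAt z (B * y t) t := by
      have : HasDerivAt (fun t => ∫ s in (0:ℝ)..t, y s) (y t) t := by
        apply intervalIntegral.integral_hasDerivAt_right
        · exact hyi.mono_set (by rw [uIcc_of_le hT, uIcc_of_le ht.1.le]; exact Icc_subset_Icc le_rfl ht.2.le)
        · exact (hy.mono Ioo_subset_Icc_self).stronglyMeasurableAtFilter isOpen_Ioo t ht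
        · exact hy.continuousAt (Icc_mem_nhds ht.1 ht.2)
      exact (this.const_mul B).const_add A
    have h2 : HasDerivAt (fun t => Real.exp (-(B * t))) (Real.exp (-(B*t)) * (-B)) t := by
      have := ((hasDerivAt_id t).const_mul B).neg.exp
      simpa using this
    exact h1.mul h2
  have hanti : AntitoneOn (fun t => z t * Real.exp (-(B * t))) (Icc 0 T) := by
    apply antitoneOn_of_deriv_nonpos (convex_Icc _ _)
    · exact hzc.mul (by fun_prop)
    · rw [interior_Icc]
      intro t ht
      exact (hder t ht).differentiableAt.differentiableWithinAt
    · rw [interior_Icc]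
      intro t ht
      rw [(hder t ht).deriv]
      have := h t (Ioo_subset_Icc_self ht)
      have e := Real.exp_pos (-(B * t))
      have : (B * (z t - y t)) * Real.exp (-(B * t)) ≥ 0 :=
        mul_nonneg (mul_nonneg hB (by linarith)) e.le
      nlinarith
  have h0 := hanti ⟨le_rfl, hT⟩ ⟨hT, le_rfl⟩ hT
  have hz0 : z 0 = A := by simp [hz]
  simp only [hz0, mul_zero, neg_zero, Real.exp_zero, mul_one] at h0
  refine (h T ⟨hT, le_rfl⟩).trans ?_
  rw [Real.exp_neg, ← div_eq_mul_inv, div_le_iff₀ (Real.exp_pos _)] at h0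
  exact h0

theorem Mild.apriori {u r : ℝ → Hsp} (h : Mild u r) {β w A : ℝ} 
    (hr : ∀ᵐ t ∂(volume.restrict (Ioi (0:ℝ))), ‖r t‖ ≤ β + w * ‖u t‖) (hA : ‖u 0‖^2 ≤ A) {t : ℝ} (ht : 0 ≤ t) :
    ‖u t‖^2 ≤ (A + 1) * Real.exp ((1 / (2 * lam 0) * (2 * β^2 + 2 * w^2)) * t) := by
  set c := 1 / (2 * lam 0) with hc
  have hc0 : 0 ≤ c := by have := lam_pos 0; positivity
  have huc : ContinuousOn (fun s => 1 + ‖u s‖^2) (Icc 0 t) :=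
    continuousOn_const.add ((h.cont.norm.pow 2).mono fun _ hx => hx.1)
  have := gronwall_int (y := fun s => 1 + ‖u s‖^2) (A := A + 1) (B := c * (2 * β^2 + 2 * w^2)) (by positivity) ht huc (by
    intro s hs
    have h1 := h.norm_sq_le hs.1
    have hint : IntervalIntegrable (fun s => 1 + ‖u s‖^2) volume 0 s := ContinuousOn.intervalIntegrable (by
      rw [uIcc_of_le hs.1]; exact huc.mono (Icc_subset_Icc le_rfl hs.2))
    have h2 : ∫ z in (0:ℝ)..s, ‖r z‖^2 ≤ ∫ z in (0:ℝ)..s, (2 * β^2 + 2 * w^2) * (1 + ‖u z‖^2) := by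
      apply intervalIntegral.integral_mono_ae_restrict hs.1 (ii_memLp_sq h.mem hs.1) (hint.const_mul _)
      have hle : volume.restrict (Ioc 0 s) ≤ volume.restrict (Ioi (0:ℝ)) := Measure.restrict_mono (fun x hx => hx.1) le_rfl
      rw [Filter.EventuallyLE, ← restrict_Ioc_eq_restrict_Icc]
      filter_upwards [ae_mono hle hr] with z hz
      have : ‖r z‖^2 ≤ (β + w * ‖u z‖)^2 := by
        have := norm_nonneg (r z)
        gcongr
      nlinarith [sq_nonneg (β - w * ‖u z‖), sq_nonneg (β * ‖u z‖), sq_nonneg w]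
    rw [intervalIntegral.integral_const_mul] at h2
    have h3 := mul_le_mul_of_nonneg_left h2 hc0
    rw [mul_assoc]
    linarith)
  linarith

theorem lip_unif {F : ℕ → ℝ → ℝ} {G : ℝ → ℝ} {M T : ℝ} (hM : 0 ≤ M)
    (hF : ∀ n, ∀ x ∈ Icc 0 T, ∀ y ∈ Icc 0 T, |F n x - F n y| ≤ M * |x - y|)
    (hl : ∀ x ∈ Icc 0 T, Filter.Tendsto (fun n => F n x) Filter.atTop (nhds (G x))) :
    TendstoUniformlyOn F G Filter.atTop (Icc 0 T) := by
  rw [← tendstoLocallyUniformlyOn_iff_tendstoUniformlyOn_of_compact isCompact_Icc]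
  have hG : ∀ x ∈ Icc 0 T, ∀ y ∈ Icc 0 T, |G x - G y| ≤ M * |x - y| := fun x hx y hy =>
    le_of_tendsto ((hl x hx).sub (hl y hy)).abs (Filter.Eventually.of_forall fun n => hF n x hx y hy)
  rw [Metric.tendstoLocallyUniformlyOn_iff]
  intro ε hε x hx
  set δ := ε / (3 * (M + 1)) with hδ
  have hδ0 : 0 < δ := by positivity
  have hMδ : M * δ ≤ ε / 3 := by
    have : (M + 1) * δ = ε / 3 := by rw [hδ]; field_simp
    nlinarith
  refine ⟨Icc 0 T ∩ Metric.ball x δ, Filter.inter_mem self_mem_nhdsWithin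
    (mem_nhdsWithin_of_mem_nhds (Metric.ball_mem_nhds x hδ0)), ?_⟩
  filter_upwards [Metric.tendsto_nhds.1 (hl x hx) (ε/3) (by positivity)] with n hn y hy
  rw [Real.dist_eq] at hn ⊢
  have hxy : |x - y| ≤ δ := by
    have := hy.2
    rw [Metric.mem_ball, dist_comm, Real.dist_eq] at this
    exact this.le
  have h1 := hG x hx y hy.1
  have h2 := hF n x hx y hy.1
  have h3 : M * |x - y| ≤ ε / 3 := (mul_le_mul_of_nonneg_left hxy hM).trans hMδ
  have e : G y - F n y = -(G x - G y) - (F n x - G x) + (F n x - F n y) := by ring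
  rw [e]
  have := abs_add_le (-(G x - G y) - (F n x - G x)) (F n x - F n y)
  have h4 := abs_sub (-(G x - G y)) (F n x - G x)
  rw [abs_neg] at h4
  linarith

theorem ii_of_memLp {rn : ℕ → ℝ → Hsp} {un : ℕ → ℝ → Hsp} (hM : ∀ n, Mild (un n) (rn n)) (k n : ℕ) {t : ℝ} (ht : 0 ≤ t) :
    IntervalIntegrable (fun z => Real.exp (lam k * z) * inner ℝ (eS k) (rn n z)) volume 0 t :=
  (ii_memLp (memLp_inner (hM n).mem _) ht).continuousOn_mul (by fun_prop)

theorem eS_norm (k : ℕ) : ‖eS k‖ = 1 := by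
  have := hB.orthonormal.1 k
  rwa [hB_coe] at this

theorem WConv.bddT {rn : ℕ → ℝ → Hsp} {r : ℝ → Hsp} {K : ℝ → ℝ} (h : WConv rn r K) (T : ℝ) :
    ∃ C, 0 ≤ C ∧ ∀ n, ∀ᵐ t, t ∈ Ioc 0 T → ‖rn n t‖ ≤ C := by
  obtain ⟨C, hC⟩ := (isCompact_Icc (a := (0:ℝ)) (b := T)).exists_bound_of_continuousOn h.Kc.continuousOn
  refine ⟨max C 0, le_max_right _ _, fun n => ?_⟩
  have := (ae_restrict_iff' measurableSet_Ioi).1 (h.bdd n)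
  filter_upwards [this] with t ht hte
  exact (ht hte.1).trans ((le_abs_self _).trans ((hC t ⟨hte.1.le, hte.2⟩).trans (le_max_left _ _)))

theorem WConv.low {rn un : ℕ → ℝ → Hsp} {r : ℝ → Hsp} {K : ℝ → ℝ} (h : WConv rn r K)
    (hM : ∀ n, Mild (un n) (rn n)) {u0 : Hsp} (h0 : Filter.Tendsto (fun n => un n 0) Filter.atTop (nhds u0))
    (k : ℕ) {T δ : ℝ} (hT : 0 < T) (hδ : 0 < δ) :
    ∀ᶠ p : ℕ × ℕ in Filter.atTop ×ˢ Filter.atTop, ∀ t ∈ Icc 0 T,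
      |(inner ℝ (eS k) (un p.1 t - un p.2 t) : ℝ)| ≤ δ := by
  set F : ℕ → ℝ → ℝ := fun n t => ∫ z in (0:ℝ)..t, Real.exp (lam k * z) * inner ℝ (eS k) (rn n z) with hF
  obtain ⟨C, hC0, hC⟩ := h.bddT T
  have hlam := lam_pos k
  have hu : TendstoUniformlyOn F (fun t => ∫ z in Ioo (0:ℝ) t, inner ℝ (r z) (Real.exp (lam k * z) • eS k)) Filter.atTop (Icc 0 T) := by
    apply lip_unif (M := Real.exp (lam k * T) * C) (by positivity)
    · intro n x hx y hy
      simp only [hF]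
      rw [intervalIntegral.integral_interval_sub_left (ii_of_memLp hM k n hx.1) (ii_of_memLp hM k n hy.1)]
      rw [← Real.norm_eq_abs]
      apply intervalIntegral.norm_integral_le_of_norm_le_const_ae
      filter_upwards [hC n] with z hz hzz
      have hz' : z ∈ Ioc 0 T := by
        rw [mem_uIoc] at hzz
        rcases hzz with hzz | hzz
        · exact ⟨hy.1.trans_lt hzz.1, hzz.2.trans hx.2⟩
        · exact ⟨hx.1.trans_lt hzz.1, hzz.2.trans hy.2⟩
      rw [norm_mul, Real.norm_of_nonneg (Real.exp_pos _).le]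
      gcongr
      · exact hz'.2
      · refine (norm_inner_le_norm _ _).trans ?_
        rw [eS_norm, one_mul]
        exact hz hz'
    · intro t ht
      rcases ht.1.eq_or_lt with rfl | ht0
      · simp [hF]
      · have := h.conv t ht0 (fun z => Real.exp (lam k * z) • eS k) (by
          apply memLp_of_bdd (T := t) (D := Real.exp (lam k * t)) subset_rfl measurableSet_Ioo
          · exact Continuous.aestronglyMeasurable (by fun_prop)
          · filter_upwards [ae_restrict_mem measurableSet_Ioo] with z hz
            rw [norm_smul, eS_norm, mul_one, Real.norm_of_nonneg (Real.exp_pos _).le]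
            have := hz.2.le
            gcongr)
        refine this.congr fun n => ?_
        simp only [hF]
        rw [intervalIntegral.integral_of_le ht0.le, integral_Ioc_eq_integral_Ioo]
        congr 1
        ext z
        rw [real_inner_smul_right, real_inner_comm]
  have h1 := hu.uniformCauchySeqOn _ (Metric.dist_mem_uniformity (half_pos hδ))
  have h2 := (h0.cauchySeq).tendsto_uniformity (Metric.dist_mem_uniformity (half_pos hδ))
  rw [← Filter.prod_atTop_atTop_eq] at h2
  filter_upwards [h1, h2] with p hp1 hp2 t ht
  have hd1 := (hM p.1).duhamel k ht.1
  have hd2 := (hM p.2).duhamel k ht.1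
  have e1 : 1 ≤ Real.exp (lam k * t) := Real.one_le_exp (mul_nonneg hlam.le ht.1)
  have h3 : |F p.1 t - F p.2 t| < δ / 2 := hp1 t ht
  have h4 : |(inner ℝ (eS k) (un p.1 0 - un p.2 0) : ℝ)| ≤ δ / 2 := by
    have hp2 : dist (un p.1 0) (un p.2 0) < δ / 2 := hp2
    refine (abs_real_inner_le_norm _ _).trans ?_
    rw [eS_norm, one_mul, ← dist_eq_norm]
    exact hp2.le
  have e2 : (inner ℝ (eS k) (un p.1 t - un p.2 t) : ℝ) * Real.exp (lam k * t) = inner ℝ (eS k) (un p.1 0 - un p.2 0) + (F p.1 t - F p.2 t) := by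
    rw [inner_sub_right, inner_sub_right, sub_mul, hd1, hd2]; simp only [hF]; ring
  calc |(inner ℝ (eS k) (un p.1 t - un p.2 t) : ℝ)| ≤ |(inner ℝ (eS k) (un p.1 t - un p.2 t) : ℝ)| * Real.exp (lam k * t) :=
        le_mul_of_one_le_right (abs_nonneg _) e1
    _ = |(inner ℝ (eS k) (un p.1 t - un p.2 t) : ℝ) * Real.exp (lam k * t)| := by rw [abs_mul, Real.abs_exp]
    _ ≤ δ := by
      rw [e2]
      have := abs_add_le (inner ℝ (eS k) (un p.1 0 - un p.2 0)) (F p.1 t - F p.2 t)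
      linarith

theorem lam_ge (k : ℕ) : (k:ℝ) ≤ lam k := by
  unfold lam kap
  have h3 := Real.pi_gt_three
  have hk : (0:ℝ) ≤ k := Nat.cast_nonneg k
  have : (k:ℝ) + 1 ≤ (k + 1) * Real.pi := by nlinarith
  nlinarith

theorem WConv.ucauchy {rn un : ℕ → ℝ → Hsp} {r : ℝ → Hsp} {K : ℝ → ℝ} (h : WConv rn r K)
    (hM : ∀ n, Mild (un n) (rn n)) {u0 : Hsp} (h0 : Filter.Tendsto (fun n => un n 0) Filter.atTop (nhds u0))
    {T : ℝ} (hT : 0 < T) : UniformCauchySeqOn un Filter.atTop (Icc 0 T) := by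
  intro U hU
  obtain ⟨ε, hε, hεU⟩ := Metric.mem_uniformity_dist.1 hU
  obtain ⟨C, hC0, hC⟩ := h.bddT T
  obtain ⟨N, hN⟩ := exists_nat_gt ((2 * C)^2 * T / ε^2 * 3)
  have hε2 : 0 < ε^2 := by positivity
  set η := ε^2 / 9 with hη
  have hlowN : ∀ᶠ p : ℕ × ℕ in Filter.atTop ×ˢ Filter.atTop, ∀ k ∈ Finset.range N, ∀ t ∈ Icc 0 T,
      |(inner ℝ (eS k) (un p.1 t - un p.2 t) : ℝ)| ≤ ε / (3 * (N + 1)) := by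
    rw [Filter.eventually_all_finset]
    intro k _
    exact h.low hM h0 k hT (by positivity)
  have h2 := (h0.cauchySeq).tendsto_uniformity (Metric.dist_mem_uniformity (show 0 < ε / 3 by positivity))
  rw [← Filter.prod_atTop_atTop_eq] at h2
  filter_upwards [hlowN, h2] with p hp1 hp2 t ht
  apply hεU
  have hp2 : dist (un p.1 0) (un p.2 0) < ε / 3 := hp2
  have hsub := (hM p.1).sub (hM p.2)
  have hlamN : 0 < lam N := lam_pos N
  have hint : ∫ z in (0:ℝ)..t, ‖rn p.1 z - rn p.2 z‖^2 ≤ (2 * C)^2 * T := by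
    have h5 := intervalIntegral.norm_integral_le_of_norm_le_const_ae (a := 0) (b := t) (C := (2*C)^2)
      (f := fun z => ‖rn p.1 z - rn p.2 z‖^2) (by
        filter_upwards [hC p.1, hC p.2] with z hz1 hz2 hz
        rw [uIoc_of_le ht.1] at hz
        have hz' : z ∈ Ioc 0 T := ⟨hz.1, hz.2.trans ht.2⟩
        rw [Real.norm_of_nonneg (by positivity)]
        gcongr
        refine (norm_sub_le _ _).trans ?_
        linarith [hz1 hz', hz2 hz'])
    refine (le_abs_self _).trans (h5.trans ?_)
    rw [sub_zero, abs_of_nonneg ht.1]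
    gcongr
    exact ht.2
  have hfin : ‖un p.1 t - un p.2 t‖^2 ≤ 2 * ε^2 / 3 := by
    refine hasSum_le_of_sum_le (parseval (un p.1 t - un p.2 t)) fun s => ?_
    have hs : ∑ k ∈ s, (inner ℝ (eS k) (un p.1 t - un p.2 t))^2 ≤
        ∑ k ∈ Finset.range N, (inner ℝ (eS k) (un p.1 t - un p.2 t))^2 +
        ∑ k ∈ s \ Finset.range N, (inner ℝ (eS k) (un p.1 t - un p.2 t))^2 := by
      rw [← Finset.sum_union Finset.disjoint_sdiff]
      apply Finset.sum_le_sum_of_subset_of_nonneg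
      · intro k hk
        by_cases hkN : k ∈ Finset.range N
        · exact Finset.mem_union_left _ hkN
        · exact Finset.mem_union_right _ (Finset.mem_sdiff.2 ⟨hk, hkN⟩)
      · intros; positivity
    have hlow : ∑ k ∈ Finset.range N, (inner ℝ (eS k) (un p.1 t - un p.2 t))^2 ≤ ε^2 / 9 := by
      calc _ ≤ ∑ k ∈ Finset.range N, (ε / (3 * (N + 1)))^2 := by
            apply Finset.sum_le_sum
            intro k hk
            rw [← sq_abs]
            gcongr
            exact hp1 k hk t ht
        _ = N * (ε / (3 * (N + 1)))^2 := by simp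
        _ ≤ ε^2 / 9 := by
            rw [div_pow, ← mul_div_assoc, div_le_div_iff₀ (by positivity) (by norm_num)]
            have hN0 : (0:ℝ) ≤ N := Nat.cast_nonneg N
            nlinarith [mul_nonneg hN0 hε2.le, mul_nonneg (mul_nonneg hN0 hN0) hε2.le]
    have htail := hsub.energy ht.1 hlamN (s \ Finset.range N) (by
      intro k hk
      have := (Finset.mem_sdiff.1 hk).2
      rw [Finset.mem_range, not_lt] at this
      exact lam_strictMono.monotone this)
    have h6 : ‖un p.1 0 - un p.2 0‖^2 ≤ ε^2/9 := by
      rw [← dist_eq_norm]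
      have : dist (un p.1 0) (un p.2 0)^2 ≤ (ε/3)^2 := by gcongr
      linarith
    have h7 : 1 / (2 * lam N) * ∫ z in (0:ℝ)..t, ‖rn p.1 z - rn p.2 z‖^2 ≤ ε^2 / 6 := by
      rw [one_div, inv_mul_le_iff₀ (by positivity)]
      refine hint.trans ?_
      have h8 := hN.le.trans (lam_ge N)
      rw [div_mul_eq_mul_div, div_le_iff₀ hε2] at h8
      linarith
    linarith
  rw [dist_eq_norm]
  nlinarith [norm_nonneg (un p.1 t - un p.2 t)]

theorem WConv.limit {rn un : ℕ → ℝ → Hsp} {r : ℝ → Hsp} {K : ℝ → ℝ} (h : WConv rn r K)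
    (hM : ∀ n, Mild (un n) (rn n)) {u0 : Hsp} (h0 : Filter.Tendsto (fun n => un n 0) Filter.atTop (nhds u0)) :
    ∃ u, Mild u r ∧ u 0 = u0 ∧ ∀ T, 0 < T → TendstoUniformlyOn un u Filter.atTop (Icc 0 T) := by
  have hpt : ∀ t : ℝ, ∃ l : Hsp, 0 ≤ t → Filter.Tendsto (fun n => un n t) Filter.atTop (nhds l) := by
    intro t
    by_cases ht : 0 ≤ t
    · obtain ⟨l, hl⟩ := cauchySeq_tendsto_of_complete ((h.ucauchy hM h0 (T := t + 1) (by linarith)).cauchySeq (x := t) ⟨ht, by linarith⟩)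
      exact ⟨l, fun _ => hl⟩
    · exact ⟨0, fun h => absurd h ht⟩
  choose u hu using hpt
  have hunif : ∀ T, 0 < T → TendstoUniformlyOn un u Filter.atTop (Icc 0 T) := fun T hT =>
    (h.ucauchy hM h0 hT).tendstoUniformlyOn_of_tendsto fun t ht => hu t ht.1
  have hcont : ContinuousOn u (Ici 0) := by
    intro t ht
    have h1 : ContinuousOn u (Icc 0 (t+1)) := (hunif (t+1) (by linarith [mem_Ici.1 ht])).continuousOn
      (Filter.Frequently.of_forall fun n => (hM n).cont.mono fun x hx => hx.1)
    refine (h1 t ⟨ht, by linarith⟩).mono_of_mem_nhdsWithin ?_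
    rw [← Ici_inter_Iic]
    exact Filter.inter_mem self_mem_nhdsWithin (mem_nhdsWithin_of_mem_nhds (Iic_mem_nhds (by linarith)))
  refine ⟨u, ⟨hcont, h.mem, ?_⟩, tendsto_nhds_unique (hu 0 le_rfl) h0, hunif⟩
  intro k t ht
  rcases ht.eq_or_lt with rfl | ht0
  · simp
  have hci : Continuous fun v : Hsp => (inner ℝ (eS k) v : ℝ) := by fun_prop
  have hc1 : ∀ s, 0 ≤ s → Filter.Tendsto (fun n => (inner ℝ (eS k) (un n s) : ℝ)) Filter.atTop (nhds (inner ℝ (eS k) (u s))) :=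
    fun s hs => (hci.tendsto _).comp (hu s hs)
  have hr1 : Filter.Tendsto (fun n => ∫ s in (0:ℝ)..t, (inner ℝ (eS k) (rn n s) : ℝ)) Filter.atTop
      (nhds (∫ s in (0:ℝ)..t, (inner ℝ (eS k) (r s) : ℝ))) := by
    have := h.conv t ht0 (fun _ => eS k) (memLp_const _)
    simp only [intervalIntegral.integral_of_le ht, integral_Ioc_eq_integral_Ioo, real_inner_comm _ (eS k)] 
    simpa only [real_inner_comm _ (eS k)] using this
  have hu1 : Filter.Tendsto (fun n => ∫ s in (0:ℝ)..t, (inner ℝ (eS k) (un n s) : ℝ)) Filter.atTop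
      (nhds (∫ s in (0:ℝ)..t, (inner ℝ (eS k) (u s) : ℝ))) := by
    apply TendstoUniformlyOn.tendsto_intervalIntegral_of_continuousOn
    · refine Filter.Eventually.of_forall fun n => ?_
      rw [uIcc_of_le ht]
      exact (hM n).ccont k t
    · rw [uIcc_of_le ht]
      exact (innerSL ℝ (eS k)).uniformContinuous.comp_tendstoUniformlyOn (hunif t ht0)
  have spl : ∀ {u r : ℝ → Hsp}, ContinuousOn u (Ici 0) → (∀ T, 0 < T → MemLp r 2 (volume.restrict (Ioo 0 T))) →
      ∫ s in (0:ℝ)..t, (inner ℝ (eS k) (r s) - lam k * inner ℝ (eS k) (u s)) =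
      (∫ s in (0:ℝ)..t, inner ℝ (eS k) (r s)) - lam k * ∫ s in (0:ℝ)..t, inner ℝ (eS k) (u s) := by
    intro u r hu hr
    rw [← intervalIntegral.integral_const_mul, intervalIntegral.integral_sub (ii_memLp (memLp_inner hr _) ht)]
    apply IntervalIntegrable.const_mul
    apply ContinuousOn.intervalIntegrable
    rw [uIcc_of_le ht]
    exact (hci.comp_continuousOn hu).mono fun _ hx => hx.1
  rw [spl hcont h.mem]
  refine tendsto_nhds_unique (hc1 t ht) (((hc1 0 le_rfl).add (hr1.sub (hu1.const_mul (lam k)))).congr fun n => ?_)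
  rw [← spl (hM n).cont (hM n).mem, ← (hM n).eq k t ht]

def oneH : Hsp := (memLp_const (1:ℝ) : MemLp (fun _ : ℝ => (1:ℝ)) 2 μ01).toLp _

def Nf (v : Hsp) : ℝ := inner ℝ |v| oneH

theorem oneH_coe : ∀ᵐ x ∂μ01, oneH x = 1 := MemLp.coeFn_toLp _

theorem Nf_cont : Continuous Nf := by
  unfold Nf
  have : Continuous fun v : Hsp => |v| := continuous_id.sup continuous_neg
  fun_prop

theorem Nf_abs (v : Hsp) : |Nf v| ≤ ‖v‖ * ‖oneH‖ := by
  unfold Nf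
  refine (abs_real_inner_le_norm _ _).trans ?_
  rw [norm_abs_eq_norm]

theorem Lp_int (v : Hsp) : Integrable (fun x => v x) μ01 := (Lp.memLp v).integrable (by norm_num)

theorem Nf_eq (v : Hsp) : Nf v = ∫ x, |v x| ∂μ01 := by
  unfold Nf
  rw [L2.inner_def]
  apply integral_congr_ae
  filter_upwards [oneH_coe, Lp.coeFn_abs v] with x h1 h2
  rw [h1, h2]; simp

theorem inner_eq_int (q v : Hsp) : inner ℝ q v = ∫ x, q x * v x ∂μ01 := by
  rw [L2.inner_def]
  apply integral_congr_ae
  filter_upwards with x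
  simp [mul_comm]

theorem mul_int (q v : Hsp) : Integrable (fun x => q x * v x) μ01 := by
  have := L2.integrable_inner (𝕜 := ℝ) q v
  refine this.congr (Filter.Eventually.of_forall fun x => ?_)
  simp [mul_comm]

theorem sel_ineq {u r : Hsp} {b w : ℝ} (hb : 0 ≤ b)
    (h : ∀ᵐ x ∂μ01, ∃ h ∈ heaviside (u x), r x = b * h + w * u x) (v : Hsp) :
    inner ℝ (r - w • u) (v - u) ≤ b * (Nf v - Nf u) := by
  rw [inner_eq_int, Nf_eq, Nf_eq, ← integral_sub (Lp_int v).abs (Lp_int u).abs, ← integral_const_mul]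
  apply integral_mono_ae (mul_int _ _) (((Lp_int v).abs.sub (Lp_int u).abs).const_mul b)
  filter_upwards [h, Lp.coeFn_sub r (w • u), Lp.coeFn_smul w u, Lp.coeFn_sub v u] with x ⟨q, hq, hr⟩ e1 e2 e3
  rw [e1, e3, Pi.sub_apply, Pi.sub_apply, e2, Pi.smul_apply, hr, smul_eq_mul, add_sub_cancel_right, mul_assoc]
  exact mul_le_mul_of_nonneg_left (heaviside_sub hq _) hb

theorem heaviside_of {q s b : ℝ} (hb : 0 < b) (h : ∀ y : ℚ, q * (y - s) ≤ b * (|(y:ℝ)| - |s|)) :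
    q / b ∈ heaviside s := by
  have h' : ∀ y : ℝ, q * (y - s) ≤ b * (|y| - |s|) := by
    intro y
    have hcl : IsClosed {y : ℝ | q * (y - s) ≤ b * (|y| - |s|)} := isClosed_le (by fun_prop) (by fun_prop)
    exact Rat.denseRange_cast.induction_on (p := fun y => q * (y - s) ≤ b * (|y| - |s|)) y hcl h
  have h0 := h' 0
  have h2 := h' (2 * s)
  have a2 : |2 * s| = 2 * |s| := by rw [abs_mul]; norm_num
  rw [a2] at h2
  rw [abs_zero] at h0
  have e : q * s = b * |s| := by linarith
  have h1 := h' 1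
  have hm := h' (-1)
  rw [abs_neg] at hm
  rw [abs_one] at h1 hm
  unfold heaviside
  split_ifs with ha hc
  · rw [abs_of_neg ha] at e
    have : q = -b := by
      have : (q + b) * s = 0 := by linarith
      rcases mul_eq_zero.1 this with h | h
      · linarith
      · exact absurd h ha.ne
    rw [mem_singleton_iff, this, neg_div, div_self hb.ne']
  · constructor
    · rw [le_div_iff₀ hb]; linarith
    · rw [div_le_iff₀ hb]; linarith
  · have hs : 0 < s := lt_of_le_of_ne (not_lt.1 ha) (Ne.symm hc)
    rw [abs_of_pos hs] at e
    have : q = b := mul_right_cancel₀ hs.ne' e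
    rw [mem_singleton_iff, this, div_self hb.ne']

theorem sel_of_ineq {u r : Hsp} {b w : ℝ} (hb : 0 < b)
    (h : ∀ v, inner ℝ (r - w • u) (v - u) ≤ b * (Nf v - Nf u)) :
    ∀ᵐ x ∂μ01, ∃ h ∈ heaviside (u x), r x = b * h + w * u x := by
  set q := r - w • u with hq
  have key : ∀ y : ℚ, ∀ᵐ x ∂μ01, q x * ((y:ℝ) - u x) ≤ b * (|(y:ℝ)| - |u x|) := by
    intro y
    have hqi := Lp_int q
    have hf : Integrable (fun x => q x * ((y:ℝ) - u x)) μ01 := by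
      have := (hqi.mul_const (y:ℝ)).sub (mul_int q u)
      refine this.congr (Filter.Eventually.of_forall fun x => ?_)
      simp only [Pi.sub_apply]; ring
    have hg : Integrable (fun x => b * (|(y:ℝ)| - |u x|)) μ01 :=
      ((integrable_const _).sub (Lp_int u).abs).const_mul b
    apply ae_le_of_forall_setIntegral_le hf hg
    intro E hE _
    classical
    have hp : MemLp (E.piecewise (fun _ => (y:ℝ)) u) 2 μ01 :=
      MemLp.piecewise hE ((memLp_const _).restrict E) ((Lp.memLp u).restrict _)
    have hv := h (hp.toLp _)
    rw [inner_eq_int, Nf_eq, Nf_eq, ← integral_sub (Lp_int _).abs (Lp_int u).abs, ← integral_const_mul] at hv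
    rw [← integral_indicator hE, ← integral_indicator hE]
    refine le_of_eq_of_le ?_ (hv.trans_eq ?_)
    · apply integral_congr_ae
      filter_upwards [hp.coeFn_toLp, Lp.coeFn_sub (hp.toLp _) u] with x h1 h2
      rw [h2, Pi.sub_apply, h1]
      by_cases hx : x ∈ E <;> simp [hx]
    · apply integral_congr_ae
      filter_upwards [hp.coeFn_toLp] with x h1
      rw [h1]
      by_cases hx : x ∈ E <;> simp [hx]
  filter_upwards [ae_all_iff.2 key, Lp.coeFn_sub r (w • u), Lp.coeFn_smul w u] with x hx e1 e2
  refine ⟨q x / b, heaviside_of hb hx, ?_⟩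
  rw [mul_div_cancel₀ _ hb.ne', hq, e1, Pi.sub_apply, e2, Pi.smul_apply, smul_eq_mul]
  ring

theorem WConv.sel {rn un : ℕ → ℝ → Hsp} {r u : ℝ → Hsp} {K : ℝ → ℝ} (h : WConv rn r K)
    {bn wn : ℕ → ℝ → ℝ} {b w : ℝ → ℝ} {b1 w1 : ℝ}
    (huc : ∀ n, ContinuousOn (un n) (Ici 0)) (hu : ContinuousOn u (Ici 0))
    (hub : ∀ T, 0 < T → ∃ D, ∀ n, ∀ t ∈ Icc 0 T, ‖un n t‖ ≤ D)
    (hlim : ∀ t, 0 ≤ t → Filter.Tendsto (fun n => un n t) Filter.atTop (nhds (u t)))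
    (hbn : ∀ n, Continuous (bn n)) (hwn : ∀ n, Continuous (wn n))
    (hb : Continuous b) (hw : Continuous w)
    (hbl : ∀ t, Filter.Tendsto (fun n => bn n t) Filter.atTop (nhds (b t)))
    (hwl : ∀ t, Filter.Tendsto (fun n => wn n t) Filter.atTop (nhds (w t)))
    (hbb : ∀ n t, |bn n t| ≤ b1) (hwb : ∀ n t, |wn n t| ≤ w1)
    (hi : ∀ n, ∀ᵐ t ∂(volume.restrict (Ioi (0:ℝ))), ∀ v,
      inner ℝ (rn n t - wn n t • un n t) (v - un n t) ≤ bn n t * (Nf v - Nf (un n t))) :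
    ∀ᵐ t ∂(volume.restrict (Ioi (0:ℝ))), ∀ v,
      inner ℝ (r t - w t • u t) (v - u t) ≤ b t * (Nf v - Nf (u t)) := by
  have step : ∀ v : Hsp, ∀ T : ℝ, 0 < T → ∀ᵐ t ∂(volume.restrict (Ioo 0 T)),
      inner ℝ (r t) (v - u t) ≤ b t * (Nf v - Nf (u t)) + w t * inner ℝ (u t) (v - u t) := by
    intro v T hT
    obtain ⟨D, hD⟩ := hub T hT
    have hD0 : 0 ≤ D := (norm_nonneg _).trans (hD 0 0 ⟨le_rfl, hT.le⟩)
    have hb10 : 0 ≤ b1 := (abs_nonneg _).trans (hbb 0 0)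
    have hw10 : 0 ≤ w1 := (abs_nonneg _).trans (hwb 0 0)
    have hsub : Ioo 0 T ⊆ Ici (0:ℝ) := fun x hx => hx.1.le
    have hcG : ∀ {b w : ℝ → ℝ} {u : ℝ → Hsp}, Continuous b → Continuous w → ContinuousOn u (Ici 0) →
        ContinuousOn (fun t => b t * (Nf v - Nf (u t)) + w t * inner ℝ (u t) (v - u t)) (Ici 0) := by
      intro b w u hb hw hu
      have h1 : ContinuousOn (fun t => Nf (u t)) (Ici 0) := Nf_cont.comp_continuousOn hu
      have h2 : ContinuousOn (fun t => (inner ℝ (u t) (v - u t) : ℝ)) (Ici 0) := hu.inner (continuousOn_const.sub hu)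
      exact (hb.continuousOn.mul (continuousOn_const.sub h1)).add (hw.continuousOn.mul h2)
    have hDu : ∀ t ∈ Icc 0 T, ‖u t‖ ≤ D := fun t ht =>
      le_of_tendsto (hlim t ht.1).norm (Filter.Eventually.of_forall fun n => hD n t ht)
    have hcm : ∀ {f : ℝ → ℝ}, ContinuousOn f (Ici 0) → Integrable f (volume.restrict (Ioo 0 T)) := by
      intro f hf
      have : IntegrableOn f (Icc 0 T) := (hf.mono fun x hx => hx.1).integrableOn_Icc
      exact this.mono_set Ioo_subset_Icc_self
    have hvu : ∀ {u : ℝ → Hsp}, ContinuousOn u (Ici 0) → ContinuousOn (fun t => v - u t) (Ici 0) :=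
      fun hu => continuousOn_const.sub hu
    have hmE : ∀ {u : ℝ → Hsp}, ContinuousOn u (Ici 0) → ∀ {E : Set ℝ}, MeasurableSet E → E ⊆ Ioo 0 T →
        AEStronglyMeasurable (fun t => v - u t) (volume.restrict E) := fun hu E hE hET =>
      ((hvu hu).mono (hET.trans hsub)).aestronglyMeasurable hE
    apply ae_le_of_forall_setIntegral_le
    · apply inner_integrable (h.mem T hT)
      exact memLp_of_bdd (D := ‖v‖ + D) subset_rfl measurableSet_Ioo (hmE hu measurableSet_Ioo subset_rfl)
        ((ae_restrict_mem measurableSet_Ioo).mono fun t ht =>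
          (norm_sub_le _ _).trans (by linarith [hDu t (Ioo_subset_Icc_self ht)])) 2
    · exact hcm (hcG hb hw hu)
    · intro E0 hE0 _
      rw [Measure.restrict_restrict hE0]
      set E := E0 ∩ Ioo 0 T with hEdef
      have hE : MeasurableSet E := hE0.inter measurableSet_Ioo
      have hET : E ⊆ Ioo 0 T := inter_subset_right
      have hEI : E ⊆ Ioi 0 := fun x hx => (hET hx).1
      have hEle : volume.restrict E ≤ volume.restrict (Ioi (0:ℝ)) := Measure.restrict_mono hEI le_rfl
      have : IsFiniteMeasure (volume.restrict E) := ⟨by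
        rw [Measure.restrict_apply_univ]
        exact (measure_mono hET).trans_lt (by simp)⟩
      have hvb : ∀ n, ∀ t ∈ E, ‖v - un n t‖ ≤ ‖v‖ + D := fun n t ht =>
        (norm_sub_le _ _).trans (by linarith [hD n t (Ioo_subset_Icc_self (hET ht))])
      have hL := h.strong (D := ‖v‖ + D) hT hET hE (gn := fun n t => v - un n t) (g := fun t => v - u t)
        (fun n => hmE (huc n) hE hET) hvb (hmE hu hE hET)
        (fun t ht => (hlim t (hEI ht).le).const_sub v)
      have hR : Filter.Tendsto (fun n => ∫ t in E, (bn n t * (Nf v - Nf (un n t)) + wn n t * inner ℝ (un n t) (v - un n t)))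
          Filter.atTop (nhds (∫ t in E, (b t * (Nf v - Nf (u t)) + w t * inner ℝ (u t) (v - u t)))) := by
        apply tendsto_integral_of_dominated_convergence (fun _ => b1 * (‖v‖ * ‖oneH‖ + D * ‖oneH‖) + w1 * (D * (‖v‖ + D)))
        · intro n
          exact ((hcG (hbn n) (hwn n) (huc n)).mono (hET.trans hsub)).aestronglyMeasurable hE
        · exact integrable_const _
        · intro n
          filter_upwards [ae_restrict_mem hE] with t ht
          have hDt := hD n t (Ioo_subset_Icc_self (hET ht))
          refine (norm_add_le _ _).trans ?_
          rw [norm_mul, norm_mul]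
          have i1 : ‖Nf v - Nf (un n t)‖ ≤ ‖v‖ * ‖oneH‖ + D * ‖oneH‖ := by
            refine (norm_sub_le _ _).trans ?_
            have := Nf_abs v
            have h2 := Nf_abs (un n t)
            have h3 : ‖un n t‖ * ‖oneH‖ ≤ D * ‖oneH‖ := by gcongr
            rw [Real.norm_eq_abs, Real.norm_eq_abs]
            linarith
          have i2 : ‖(inner ℝ (un n t) (v - un n t) : ℝ)‖ ≤ D * (‖v‖ + D) := by
            refine (norm_inner_le_norm _ _).trans ?_
            have := hvb n t ht
            gcongr
          have i3 : ‖bn n t‖ ≤ b1 := hbb n t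
          have i4 : ‖wn n t‖ ≤ w1 := hwb n t
          gcongr
        · filter_upwards [ae_restrict_mem hE] with t ht
          have ht0 : 0 ≤ t := (hEI ht).le
          have hut := hlim t ht0
          have j1 : Filter.Tendsto (fun n => Nf (un n t)) Filter.atTop (nhds (Nf (u t))) := (Nf_cont.tendsto _).comp hut
          exact ((hbl t).mul (j1.const_sub _)).add ((hwl t).mul (hut.inner (hut.const_sub v)))
      refine le_of_tendsto_of_tendsto hL hR (Filter.Eventually.of_forall fun n => ?_)
      apply integral_mono_ae
      · apply inner_integrable (h.memn n hET hE)
        exact memLp_of_bdd (D := ‖v‖ + D) hET hE (hmE (huc n) hE hET)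
          ((ae_restrict_mem hE).mono fun t ht => hvb n t ht) 2
      · have := hcm (hcG (hbn n) (hwn n) (huc n))
        exact this.mono_measure (Measure.restrict_mono hET le_rfl)
      · filter_upwards [ae_mono hEle (hi n)] with t ht
        have := ht v
        rw [inner_sub_left, real_inner_smul_left] at this
        linarith
  have step2 : ∀ᵐ t ∂(volume.restrict (Ioi (0:ℝ))), ∀ j : ℕ,
      inner ℝ (r t) (TopologicalSpace.denseSeq Hsp j - u t) ≤ b t * (Nf (TopologicalSpace.denseSeq Hsp j) - Nf (u t))
        + w t * inner ℝ (u t) (TopologicalSpace.denseSeq Hsp j - u t) := by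
    rw [ae_all_iff]
    intro j
    have : ∀ m : ℕ, _ := fun m : ℕ => (ae_restrict_iff' measurableSet_Ioo).1 (step (TopologicalSpace.denseSeq Hsp j) (m + 1) (by positivity))
    rw [ae_restrict_iff' measurableSet_Ioi]
    filter_upwards [ae_all_iff.2 this] with t ht ht0
    obtain ⟨m, hm⟩ := exists_nat_gt t
    exact ht m ⟨ht0, by linarith⟩
  filter_upwards [step2] with t ht v
  have hcl : IsClosed {v : Hsp | inner ℝ (r t) (v - u t) ≤ b t * (Nf v - Nf (u t)) + w t * inner ℝ (u t) (v - u t)} := by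
    have := Nf_cont
    exact isClosed_le (by fun_prop) (by fun_prop)
  have hv := (TopologicalSpace.denseRange_denseSeq Hsp).induction_on
    (p := fun v => inner ℝ (r t) (v - u t) ≤ b t * (Nf v - Nf (u t)) + w t * inner ℝ (u t) (v - u t)) v hcl ht
  rw [inner_sub_left, real_inner_smul_left]
  linarith

/-- under (Cond1), `ω₁ < π²` and uniform continuity of `b, ω`, if
`u₀ⁿ → u₀` in `H` and `σₙ → σ` in `Σ`, then any sequence of solutions
`uₙ ∈ 𝒟_{0,σₙ}(u₀ⁿ)` has a subsequence converging, uniformly on compact subsets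
of `[0,∞)`, to some solution `u ∈ 𝒟_{0,σ}(u₀)`. -/
theorem statement18
    (b ω : ℝ → ℝ) (b0 b1 ω0 ω1 : ℝ) (hC : Cond1 b ω b0 b1 ω0 ω1)
    (hω1 : ω1 < Real.pi ^ 2)
    (hbu : UniformContinuous b) (hωu : UniformContinuous ω)
    (σ0 : C(ℝ, ℝ × ℝ)) (hσ0 : ∀ t, σ0 t = (b t, ω t))
    (σn : ℕ → C(ℝ, ℝ × ℝ)) (σ : C(ℝ, ℝ × ℝ))
    (hσn : ∀ n, σn n ∈ hullSet σ0) (hσ : σ ∈ hullSet σ0)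
    (hσconv : Filter.Tendsto σn Filter.atTop (nhds σ))
    (u0n : ℕ → Hsp) (u0 : Hsp)
    (hu0conv : Filter.Tendsto u0n Filter.atTop (nhds u0))
    (un : ℕ → ℝ → Hsp)
    (hun : ∀ n, IsStrongSolution (fun s => (σn n s).1) (fun s => (σn n s).2) 0 (un n))
    (hun0 : ∀ n, un n 0 = u0n n) :
    ∃ φ : ℕ → ℕ, StrictMono φ ∧
      ∃ u : ℝ → Hsp,
        IsStrongSolution (fun s => (σ s).1) (fun s => (σ s).2) 0 u ∧
        u 0 = u0 ∧
        ∀ T : ℝ, 0 < T →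
          TendstoUniformlyOn (fun k t => un (φ k) t) u Filter.atTop (Icc 0 T) := by
  choose rn un' uxx hS using hun
  have hM : ∀ n, Mild (un n) (rn n) := fun n => (hS n).mild
  have hbnd : ∀ n t, σn n t ∈ Icc b0 b1 ×ˢ Icc 0 ω1 := fun n t => hull_bounds hC hσ0 (hσn n) t
  have hbσ : ∀ t, σ t ∈ Icc b0 b1 ×ˢ Icc 0 ω1 := fun t => hull_bounds hC hσ0 hσ t
  have hb00 := hC.b0pos
  have hb1 : 0 ≤ b1 := hb00.le.trans ((hC.blb 0).trans (hC.bub 0))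
  have hw1 : 0 ≤ ω1 := hC.ω0nonneg.trans ((hC.ωlb 0).trans (hC.ωub 0))
  obtain ⟨M, hMb⟩ := hu0conv.norm.bddAbove_range
  have hMn : ∀ n, ‖u0n n‖ ≤ M := fun n => hMb ⟨n, rfl⟩
  have hrb : ∀ n, ∀ᵐ t ∂(volume.restrict (Ioi (0:ℝ))), ‖rn n t‖ ≤ b1 + ω1 * ‖un n t‖ := by
    intro n
    filter_upwards [(hS n).sel] with t ht
    obtain ⟨⟨h1, h2⟩, h3, h4⟩ := hbnd n t
    exact norm_le_of_sel (hb00.le.trans h1) h2 h3 h4 ht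
  set B := 1 / (2 * lam 0) * (2 * b1^2 + 2 * ω1^2) with hB
  set D : ℝ → ℝ := fun t => Real.sqrt ((M^2 + 1) * Real.exp (B * t)) with hDdef
  have hDc : Continuous D := by rw [hDdef]; fun_prop
  have hDu : ∀ n t, 0 ≤ t → ‖un n t‖ ≤ D t := by
    intro n t ht
    apply Real.le_sqrt_of_sq_le
    refine (hM n).apriori (hrb n) ?_ ht
    rw [hun0]
    have := hMn n
    gcongr
  have hB0 : 0 ≤ B := by have := lam_pos 0; positivity
  have hDmono : ∀ s t, s ≤ t → D s ≤ D t := by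
    intro s t hst
    simp only [hDdef]
    gcongr
  have hmeas : ∀ n, AEStronglyMeasurable (rn n) (volume.restrict (Ioi (0:ℝ))) := by
    intro n
    have : Ioi (0:ℝ) = ⋃ m : ℕ, Ioo (0:ℝ) (m + 1) := by
      ext t
      simp only [mem_Ioi, mem_iUnion, mem_Ioo]
      constructor
      · intro ht
        obtain ⟨m, hm⟩ := exists_nat_gt t
        exact ⟨m, ht, by linarith⟩
      · rintro ⟨m, hm, -⟩
        exact hm
    rw [this, aestronglyMeasurable_iUnion_iff]
    intro m
    exact ((hM n).mem (m + 1) (by positivity)).1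
  set K : ℝ → ℝ := fun t => b1 + ω1 * D t with hK
  have hKc : Continuous K := by rw [hK]; fun_prop
  have hK0 : ∀ t, 0 ≤ K t := fun t => add_nonneg hb1 (mul_nonneg hw1 (Real.sqrt_nonneg _))
  have hrK : ∀ n, ∀ᵐ t ∂(volume.restrict (Ioi (0:ℝ))), ‖rn n t‖ ≤ K t := by
    intro n
    filter_upwards [hrb n, ae_restrict_mem measurableSet_Ioi] with t ht ht0
    refine ht.trans ?_
    simp only [hK]
    gcongr
    exact hDu n t (le_of_lt ht0)
  obtain ⟨φ, hφ, r, hrm, hconv⟩ := weak_compact rn K hKc hK0 hmeas hrK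
  have hW : WConv (fun n => rn (φ n)) r K :=
    ⟨hKc, hK0, fun n => hmeas _, fun n => hrK _, hrm, hconv⟩
  have h0 : Filter.Tendsto (fun n => un (φ n) 0) Filter.atTop (nhds u0) := by
    simp only [hun0]
    exact hu0conv.comp hφ.tendsto_atTop
  obtain ⟨u, huM, hu0, hunif⟩ := hW.limit (un := fun n => un (φ n)) (fun n => hM _) h0
  refine ⟨φ, hφ, u, huM.strong ?_, hu0, hunif⟩
  have hσt : ∀ t, Filter.Tendsto (fun n => σn (φ n) t) Filter.atTop (nhds (σ t)) := fun t =>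
    (((continuous_eval_const t).tendsto σ).comp hσconv).comp hφ.tendsto_atTop
  have hsel := hW.sel (un := fun n => un (φ n)) (u := u) (bn := fun n t => (σn (φ n) t).1)
    (wn := fun n t => (σn (φ n) t).2) (b := fun t => (σ t).1) (w := fun t => (σ t).2) (b1 := b1) (w1 := ω1)
    (fun n => (hM _).cont) huM.cont
    (fun T hT => ⟨D T, fun n t ht => (hDu _ t ht.1).trans (hDmono _ _ ht.2)⟩)
    (fun t ht => (hunif (t + 1) (by linarith)).tendsto_at ⟨ht, by linarith⟩)
    (fun n => by fun_prop) (fun n => by fun_prop) (by fun_prop) (by fun_prop)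
    (fun t => (continuous_fst.tendsto _).comp (hσt t)) (fun t => (continuous_snd.tendsto _).comp (hσt t))
    (fun n t => by
      obtain ⟨⟨h1, h2⟩, h3, h4⟩ := hbnd (φ n) t
      rw [abs_of_nonneg (hb00.le.trans h1)]; exact h2)
    (fun n t => by
      obtain ⟨⟨h1, h2⟩, h3, h4⟩ := hbnd (φ n) t
      rw [abs_of_nonneg h3]; exact h4)
    (fun n => by
      filter_upwards [(hS (φ n)).sel] with t ht v
      obtain ⟨⟨h1, h2⟩, h3, h4⟩ := hbnd (φ n) t
      exact sel_ineq (hb00.le.trans h1) ht v)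
  filter_upwards [hsel] with t ht
  exact sel_of_ineq (hb00.trans_le (hbσ t).1.1) ht

end
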